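/- arXiv:0904.2547 — 5 statements merged into one kernel-verified Lean document; each statement's English description precedes it below -/
import Mathlib

section
/- Let γ = 1 and let u₀ : ℝ → ℝ be a continuously differentiable 1-periodic function. Set m = −inf_{x∈ℝ} u₀'(x) and M = sup_{x∈ℝ} |u₀(x)|. If m³ > 4M(4 + m), then the wave breaks before time 2/m: every periodic classical solution u of the Ostrovsky–Hunter equation on [0,T) with u(0,·) = u₀ and with u_x bounded from below on [0,T) × ℝ satisfies T ≤ 2/m. -/
open MeasureTheory Filter Set intervalIntegral

/-- A periodic (period `1` in `x`) classical solution of the Ostrovsky–Hunter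
equation `(u_t + u u_x)_x = γ u` on the set `S` of times (typically `[0,T)`):
`u` is `1`-periodic in `x`, continuously differentiable in `t`, twice
continuously differentiable in `x`, with `u_tx` continuous, and the expanded
equation `u_tx + u_x² + u u_xx = γ u` holds pointwise at positive times of `S`. -/
structure IsPeriodicOHSolution (γ : ℝ) (S : Set ℝ) (u : ℝ → ℝ → ℝ) : Prop where
  periodic : ∀ t ∈ S, ∀ x : ℝ, u t (x + 1) = u t x
  diff_t : ∀ t ∈ S, ∀ x : ℝ, DifferentiableAt ℝ (fun s => u s x) t
  diff_x : ∀ t ∈ S, ∀ x : ℝ, DifferentiableAt ℝ (u t) x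
  diff_xx : ∀ t ∈ S, ∀ x : ℝ, DifferentiableAt ℝ (deriv (u t)) x
  diff_tx : ∀ t ∈ S, ∀ x : ℝ, DifferentiableAt ℝ (fun y => deriv (fun s => u s y) t) x
  cont_u : ContinuousOn (fun p : ℝ × ℝ => u p.1 p.2) (S ×ˢ (Set.univ : Set ℝ))
  cont_ut : ContinuousOn (fun p : ℝ × ℝ => deriv (fun s => u s p.2) p.1)
      (S ×ˢ (Set.univ : Set ℝ))
  cont_ux : ContinuousOn (fun p : ℝ × ℝ => deriv (u p.1) p.2) (S ×ˢ (Set.univ : Set ℝ))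
  cont_uxx : ContinuousOn (fun p : ℝ × ℝ => deriv (deriv (u p.1)) p.2)
      (S ×ˢ (Set.univ : Set ℝ))
  cont_utx : ContinuousOn (fun p : ℝ × ℝ => deriv (fun y => deriv (fun s => u s y) p.1) p.2)
      (S ×ˢ (Set.univ : Set ℝ))
  eqn : ∀ t ∈ S, 0 < t → ∀ x : ℝ,
    deriv (fun y => deriv (fun s => u s y) t) x
      + (deriv (u t) x) ^ 2 + u t x * deriv (deriv (u t)) x = γ * u t x


lemma oh_param_deriv {p q a b t₀ : ℝ} {g g' : ℝ → ℝ → ℝ} (ht : t₀ ∈ Ioo p q)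
    (hg : ∀ t ∈ Ioo p q, ∀ x ∈ uIcc a b, HasDerivAt (fun s => g s x) (g' t x) t)
    (hgc : ∀ t ∈ Ioo p q, ContinuousOn (g t) (uIcc a b))
    (hg' : ContinuousOn (fun z : ℝ × ℝ => g' z.1 z.2) (Ioo p q ×ˢ uIcc a b)) :
    HasDerivAt (fun t => ∫ x in a..b, g t x) (∫ x in a..b, g' t₀ x) t₀ := by
  obtain ⟨p', hp1, hp2⟩ := exists_between ht.1
  obtain ⟨q', hq1, hq2⟩ := exists_between ht.2
  have hsub : Icc p' q' ⊆ Ioo p q := fun s hs => ⟨hp1.trans_le hs.1, hs.2.trans_lt hq2⟩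
  obtain ⟨C, hC⟩ := (isCompact_Icc.prod isCompact_uIcc).exists_bound_of_continuousOn
    (hg'.mono (prod_mono hsub (Subset.refl (uIcc a b))))
  have hg't : ContinuousOn (g' t₀) (uIcc a b) :=
    hg'.comp (f := fun x => (t₀, x)) (by fun_prop) (fun x hx => ⟨ht, hx⟩)
  refine (intervalIntegral.hasDerivAt_integral_of_dominated_loc_of_deriv_le (s := Icc p' q')
    (bound := fun _ => C) (Icc_mem_nhds hp2 hq1) ?_ ?_ ?_ ?_ ?_ ?_).2
  · filter_upwards [Icc_mem_nhds hp2 hq1] with t htt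
    exact ((hgc t (hsub htt)).mono uIoc_subset_uIcc).aestronglyMeasurable measurableSet_uIoc
  · exact (hgc t₀ ht).intervalIntegrable
  · exact (hg't.mono uIoc_subset_uIcc).aestronglyMeasurable measurableSet_uIoc
  · exact Eventually.of_forall fun x hx t htt => hC (t, x) ⟨htt, uIoc_subset_uIcc hx⟩
  · exact intervalIntegrable_const
  · exact Eventually.of_forall fun x hx t htt => hg t (hsub htt) x (uIoc_subset_uIcc hx)

lemma oh_param_cont {p q a b : ℝ} {g : ℝ → ℝ → ℝ}
    (hg : ContinuousOn (fun z : ℝ × ℝ => g z.1 z.2) (Icc p q ×ˢ uIcc a b)) :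
    ContinuousOn (fun t => ∫ x in a..b, g t x) (Icc p q) := by
  obtain ⟨C, hC⟩ := (isCompact_Icc.prod isCompact_uIcc).exists_bound_of_continuousOn hg
  intro t₀ ht₀
  have hgt : ∀ t ∈ Icc p q, ContinuousOn (g t) (uIcc a b) := fun t ht =>
    hg.comp (f := fun x => (t, x)) (by fun_prop) (fun x hx => ⟨ht, hx⟩)
  refine continuousWithinAt_of_dominated_interval (bound := fun _ => C) ?_ ?_ ?_ ?_
  · filter_upwards [self_mem_nhdsWithin] with t ht
    exact ((hgt t ht).mono uIoc_subset_uIcc).aestronglyMeasurable measurableSet_uIoc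
  · filter_upwards [self_mem_nhdsWithin] with t ht
    exact Eventually.of_forall fun x hx => hC (t, x) ⟨ht, uIoc_subset_uIcc hx⟩
  · exact intervalIntegrable_const
  · refine Eventually.of_forall fun x hx => ?_
    exact (hg.comp (f := fun t => (t, x)) (by fun_prop)
      (fun t ht => ⟨ht, uIoc_subset_uIcc hx⟩)) t₀ ht₀

lemma oh_chain {T t v : ℝ} {G Gt Gx : ℝ → ℝ → ℝ} {X : ℝ → ℝ} (ht : t ∈ Ioo 0 T)
    (h1 : ∀ s ∈ Ioo 0 T, ∀ y, HasDerivAt (fun r => G r y) (Gt s y) s)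
    (h2 : ∀ s ∈ Ioo 0 T, ∀ y, HasDerivAt (G s) (Gx s y) y)
    (c1 : ContinuousOn (fun z : ℝ × ℝ => Gt z.1 z.2) (Ioo 0 T ×ˢ univ))
    (c2 : ContinuousOn (fun z : ℝ × ℝ => Gx z.1 z.2) (Ioo 0 T ×ˢ univ))
    (hX : HasDerivAt X v t) :
    HasDerivAt (fun s => G s (X s)) (Gt t (X t) + Gx t (X t) * v) t := by
  have hn : Ioo 0 T ×ˢ (univ : Set ℝ) ∈ nhds (t, X t) :=
    prod_mem_nhds (Ioo_mem_nhds ht.1 ht.2) univ_mem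
  have key := hasStrictFDerivAt_uncurry_coprod (𝕜 := ℝ) (u := (t, X t)) (f := G)
    (f₁ := fun s y => ContinuousLinearMap.toSpanSingleton ℝ (Gt s y))
    (f₂ := fun s y => ContinuousLinearMap.toSpanSingleton ℝ (Gx s y))
    (by filter_upwards [hn] with z hz using (h1 z.1 hz.1 z.2).hasFDerivAt)
    (by filter_upwards [hn] with z hz using (h2 z.1 hz.1 z.2).hasFDerivAt)
    (by
      have := (c1.continuousAt hn)
      exact (ContinuousLinearMap.toSpanSingletonCLE (𝕜 := ℝ) (E := ℝ)).continuous.continuousAt.comp this)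
    (by
      have := (c2.continuousAt hn)
      exact (ContinuousLinearMap.toSpanSingletonCLE (𝕜 := ℝ) (E := ℝ)).continuous.continuousAt.comp this)
  have h3 : HasDerivAt (fun s => (s, X s)) (1, v) t := (hasDerivAt_id t).prodMk hX
  have := key.hasFDerivAt.comp_hasDerivAt t h3
  refine HasDerivAt.congr_deriv (f := fun s => G s (X s)) this ?_
  simp [Function.HasUncurry.uncurry, mul_comm]

section sol
variable {T : ℝ} {u : ℝ → ℝ → ℝ}

lemma oh_clairaut (h : IsPeriodicOHSolution 1 (Ico 0 T) u) {t : ℝ} (ht : t ∈ Ioo 0 T) (x : ℝ) :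
    HasDerivAt (fun s => deriv (u s) x) (deriv (fun y => deriv (fun s => u s y) t) x) t := by
  obtain ⟨a, ha1, ha2⟩ := exists_between ht.1
  have haT : a ∈ Ioo 0 T := ⟨ha1, ha2.trans ht.2⟩
  have hI : Ioo 0 T ⊆ Ico 0 T := Ioo_subset_Ico_self
  have hsub : ∀ s ∈ Ioo 0 T, uIcc a s ⊆ Ioo 0 T := fun s hs =>
    ordConnected_Ioo.uIcc_subset haT hs
  have cut : ∀ y, ContinuousOn (fun r => deriv (fun s => u s y) r) (Ioo 0 T) := fun y =>
    h.cont_ut.comp (f := fun r => (r, y)) (by fun_prop) (fun r hr => ⟨hI hr, mem_univ _⟩)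
  have cutx : ContinuousOn (fun r => deriv (fun y => deriv (fun s => u s y) r) x) (Ioo 0 T) :=
    h.cont_utx.comp (f := fun r => (r, x)) (by fun_prop) (fun r hr => ⟨hI hr, mem_univ _⟩)
  have key : ∀ s ∈ Ioo 0 T, deriv (u s) x = deriv (u a) x +
      ∫ r in a..s, deriv (fun y => deriv (fun s => u s y) r) x := by
    intro s hs
    have e1 : ∀ y, ∫ r in a..s, deriv (fun s => u s y) r = u s y - u a y := fun y =>
      integral_deriv_eq_sub (fun r hr => h.diff_t r (hI (hsub s hs hr)) y)
        ((cut y).mono (hsub s hs)).intervalIntegrable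
    have e2 : HasDerivAt (fun y => ∫ r in a..s, deriv (fun s => u s y) r)
        (∫ r in a..s, deriv (fun y => deriv (fun s => u s y) r) x) x := by
      refine oh_param_deriv (p := x - 1) (q := x + 1) (g := fun y r => deriv (fun s => u s y) r)
        (g' := fun y r => deriv (fun y => deriv (fun s => u s y) r) y)
        ⟨by linarith, by linarith⟩ ?_ ?_ ?_
      · intro y _ r hr
        exact (h.diff_tx r (hI (hsub s hs hr)) y).hasDerivAt
      · intro y _
        exact (cut y).mono (hsub s hs)
      · exact h.cont_utx.comp (f := fun z : ℝ × ℝ => (z.2, z.1)) (by fun_prop)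
          (fun z hz => ⟨hI (hsub s hs hz.2), mem_univ _⟩)
    have e3 := (h.diff_x s (hI hs) x).hasDerivAt.sub (h.diff_x a (hI haT) x).hasDerivAt
    have e4 : (fun y => ∫ r in a..s, deriv (fun s => u s y) r) = u s - u a := by
      funext y; simp [e1 y]
    rw [e4] at e2
    have := e2.unique e3
    linarith
  have hn : Ioo 0 T ∈ nhds t := Ioo_mem_nhds ht.1 ht.2
  have f1 : HasDerivAt (fun s => deriv (u a) x +
      ∫ r in a..s, deriv (fun y => deriv (fun s => u s y) r) x)
      (deriv (fun y => deriv (fun s => u s y) t) x) t := by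
    refine HasDerivAt.const_add _ (integral_hasDerivAt_right ?_ ?_ ?_)
    · exact (cutx.mono (hsub t ht)).intervalIntegrable
    · exact cutx.stronglyMeasurableAtFilter isOpen_Ioo t ht
    · exact cutx.continuousAt hn
  refine f1.congr_of_eventuallyEq ?_
  filter_upwards [hn] with s hs using key s hs

lemma oh_F_deriv (h : IsPeriodicOHSolution 1 (Ico 0 T) u) {t : ℝ} (ht : t ∈ Ioo 0 T) (x : ℝ) :
    HasDerivAt (fun y => deriv (fun s => u s y) t + u t y * deriv (u t) y) (u t x) x := by
  have hI : t ∈ Ico 0 T := Ioo_subset_Ico_self ht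
  have h1 := (h.diff_tx t hI x).hasDerivAt
  have h2 := (h.diff_x t hI x).hasDerivAt
  have h3 := (h.diff_xx t hI x).hasDerivAt
  have e := h.eqn t hI ht.1 x
  refine HasDerivAt.congr_deriv
    (f := fun y => deriv (fun s => u s y) t + u t y * deriv (u t) y) (h1.add (h2.mul h3)) ?_
  linarith

lemma oh_ux_per (h : IsPeriodicOHSolution 1 (Ico 0 T) u) {t : ℝ} (ht : t ∈ Ico 0 T) (x : ℝ) :
    deriv (u t) (x + 1) = deriv (u t) x := by
  rw [← deriv_comp_add_const]
  congr 1
  funext y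
  exact h.periodic t ht y

lemma oh_ut_per (h : IsPeriodicOHSolution 1 (Ico 0 T) u) {t : ℝ} (ht : t ∈ Ioo 0 T) (x : ℝ) :
    deriv (fun s => u s (x + 1)) t = deriv (fun s => u s x) t := by
  apply Filter.EventuallyEq.deriv_eq
  filter_upwards [Ioo_mem_nhds ht.1 ht.2] with s hs
  exact h.periodic s (Ioo_subset_Ico_self hs) x

lemma oh_u_cont (h : IsPeriodicOHSolution 1 (Ico 0 T) u) {t : ℝ} (ht : t ∈ Ico 0 T) :
    Continuous (u t) :=
  continuous_iff_continuousAt.2 fun x => (h.diff_x t ht x).continuousAt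

lemma oh_ux_cont (h : IsPeriodicOHSolution 1 (Ico 0 T) u) {t : ℝ} (ht : t ∈ Ico 0 T) :
    Continuous (deriv (u t)) :=
  continuous_iff_continuousAt.2 fun x => (h.diff_xx t ht x).continuousAt

lemma oh_ut_cont (h : IsPeriodicOHSolution 1 (Ico 0 T) u) {t : ℝ} (ht : t ∈ Ico 0 T) :
    Continuous (fun y => deriv (fun s => u s y) t) :=
  continuous_iff_continuousAt.2 fun x => (h.diff_tx t ht x).continuousAt

lemma oh_mean (h : IsPeriodicOHSolution 1 (Ico 0 T) u) {t : ℝ} (ht : t ∈ Ioo 0 T) :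
    ∫ x in (0:ℝ)..1, u t x = 0 := by
  have hI : t ∈ Ico 0 T := Ioo_subset_Ico_self ht
  rw [integral_eq_sub_of_hasDerivAt (fun x _ => oh_F_deriv h ht x)
    ((oh_u_cont h hI).intervalIntegrable _ _)]
  have e1 := oh_ut_per h ht 0
  have e2 := oh_ux_per h hI 0
  have e3 := h.periodic t hI 0
  simp only [zero_add] at e1 e2 e3
  rw [e1, e2, e3]; ring

lemma oh_mean_ut (h : IsPeriodicOHSolution 1 (Ico 0 T) u) {t : ℝ} (ht : t ∈ Ioo 0 T) :
    ∫ x in (0:ℝ)..1, deriv (fun s => u s x) t = 0 := by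
  have h1 : HasDerivAt (fun t => ∫ x in (0:ℝ)..1, u t x)
      (∫ x in (0:ℝ)..1, deriv (fun s => u s x) t) t := by
    refine oh_param_deriv (g' := fun t x => deriv (fun s => u s x) t) ht ?_ ?_ ?_
    · intro s hs x _
      exact (h.diff_t s (Ioo_subset_Ico_self hs) x).hasDerivAt
    · intro s hs
      exact (oh_u_cont h (Ioo_subset_Ico_self hs)).continuousOn
    · exact h.cont_ut.mono (prod_mono Ioo_subset_Ico_self (subset_univ _))
  have h2 : HasDerivAt (fun t => ∫ x in (0:ℝ)..1, u t x) 0 t := by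
    refine (hasDerivAt_const t (0:ℝ)).congr_of_eventuallyEq ?_
    filter_upwards [Ioo_mem_nhds ht.1 ht.2] with s hs using oh_mean h hs
  exact h1.unique h2

lemma oh_mean_F (h : IsPeriodicOHSolution 1 (Ico 0 T) u) {t : ℝ} (ht : t ∈ Ioo 0 T) :
    ∫ x in (0:ℝ)..1, (deriv (fun s => u s x) t + u t x * deriv (u t) x) = 0 := by
  have hI : t ∈ Ico 0 T := Ioo_subset_Ico_self ht
  have c1 := oh_u_cont h hI
  have c2 := oh_ux_cont h hI
  have c3 := oh_ut_cont h hI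
  rw [intervalIntegral.integral_add (c3.intervalIntegrable _ _)
    (Continuous.intervalIntegrable (by fun_prop) _ _), oh_mean_ut h ht]
  have : ∀ x ∈ uIcc (0:ℝ) 1, HasDerivAt (fun y => (u t y) ^ 2 / 2) (u t x * deriv (u t) x) x := by
    intro x _
    have := ((h.diff_x t hI x).hasDerivAt.pow 2).div_const 2
    refine HasDerivAt.congr_deriv (f := fun y => (u t y) ^ 2 / 2) this ?_
    simp only [Nat.cast_ofNat]
    ring
  rw [integral_eq_sub_of_hasDerivAt this ((c1.mul c2).intervalIntegrable _ _)]
  have e3 := h.periodic t hI 0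
  simp only [zero_add] at e3
  rw [e3]; ring

lemma oh_energy_deriv (h : IsPeriodicOHSolution 1 (Ico 0 T) u) {t : ℝ} (ht : t ∈ Ioo 0 T) :
    HasDerivAt (fun t => ∫ x in (0:ℝ)..1, (u t x) ^ 2) 0 t := by
  have hI : t ∈ Ico 0 T := Ioo_subset_Ico_self ht
  have c1 := oh_u_cont h hI
  have c3 := oh_ut_cont h hI
  have h1 : HasDerivAt (fun t => ∫ x in (0:ℝ)..1, (u t x) ^ 2)
      (∫ x in (0:ℝ)..1, 2 * u t x * deriv (fun s => u s x) t) t := by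
    refine oh_param_deriv (g := fun t x => (u t x) ^ 2)
      (g' := fun t x => 2 * u t x * deriv (fun s => u s x) t) ht ?_ ?_ ?_
    · intro s hs x _
      have := (h.diff_t s (Ioo_subset_Ico_self hs) x).hasDerivAt.pow 2
      refine HasDerivAt.congr_deriv (f := fun r => (u r x) ^ 2) this ?_
      simp only [Nat.cast_ofNat]
      ring
    · intro s hs
      exact ((oh_u_cont h (Ioo_subset_Ico_self hs)).pow 2).continuousOn
    · exact (((continuousOn_const (c := (2:ℝ))).mul h.cont_u).mul h.cont_ut).mono
        (prod_mono Ioo_subset_Ico_self (subset_univ _))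
  have h2 : ∀ x ∈ uIcc (0:ℝ) 1, HasDerivAt
      (fun y => (deriv (fun s => u s y) t + u t y * deriv (u t) y) ^ 2 - 2 / 3 * (u t y) ^ 3)
      (2 * u t x * deriv (fun s => u s x) t) x := by
    intro x _
    have := ((oh_F_deriv h ht x).pow 2).sub
      (((h.diff_x t hI x).hasDerivAt.pow 3).const_mul (2/3))
    refine HasDerivAt.congr_deriv (f := fun y =>
      (deriv (fun s => u s y) t + u t y * deriv (u t) y) ^ 2 - 2 / 3 * (u t y) ^ 3) this ?_
    simp only [Nat.cast_ofNat]
    ring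
  rw [integral_eq_sub_of_hasDerivAt h2 (((continuous_const.mul c1).mul c3).intervalIntegrable _ _)]
    at h1
  have e1 := oh_ut_per h ht 0
  have e2 := oh_ux_per h hI 0
  have e3 := h.periodic t hI 0
  simp only [zero_add] at e1 e2 e3
  rw [e1, e2, e3, sub_self] at h1
  exact h1

lemma oh_energy (h : IsPeriodicOHSolution 1 (Ico 0 T) u) {t : ℝ} (ht : t ∈ Ioo 0 T) :
    ∫ x in (0:ℝ)..1, (u t x) ^ 2 = ∫ x in (0:ℝ)..1, (u 0 x) ^ 2 := by
  have hc : ContinuousOn (fun t => ∫ x in (0:ℝ)..1, (u t x) ^ 2) (Icc 0 t) := by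
    refine oh_param_cont (g := fun t x => (u t x) ^ 2) ?_
    exact (h.cont_u.pow 2).mono
      (prod_mono (fun s hs => ⟨hs.1, hs.2.trans_lt ht.2⟩) (subset_univ _))
  obtain ⟨c, hc1, hc2⟩ := exists_hasDerivAt_eq_slope _ (fun _ => (0:ℝ)) ht.1 hc
    (fun s hs => oh_energy_deriv h ⟨hs.1, hs.2.trans ht.2⟩)
  have : (0:ℝ) < t := ht.1
  rw [eq_div_iff (by linarith)] at hc2
  linarith

lemma oh_F_bound (h : IsPeriodicOHSolution 1 (Ico 0 T) u) {M : ℝ} (hM : 0 < M)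
    (hu : ∀ x, |u 0 x| ≤ M) {t : ℝ} (ht : t ∈ Ioo 0 T) (x : ℝ) :
    |deriv (fun s => u s x) t + u t x * deriv (u t) x| ≤ M := by
  have hI : t ∈ Ico 0 T := Ioo_subset_Ico_self ht
  have h0 : (0:ℝ) ∈ Ico 0 T := ⟨le_rfl, ht.1.trans ht.2⟩
  have c0 := oh_u_cont h h0
  have c1 := oh_u_cont h hI
  have c2 := oh_ux_cont h hI
  have c3 := oh_ut_cont h hI
  have E : ∫ x in (0:ℝ)..1, (u t x) ^ 2 ≤ M ^ 2 := by
    rw [oh_energy h ht]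
    calc ∫ x in (0:ℝ)..1, (u 0 x) ^ 2 ≤ ∫ x in (0:ℝ)..1, M ^ 2 := by
          apply integral_mono_on (by norm_num) ((c0.pow 2).intervalIntegrable _ _)
            intervalIntegrable_const
          intro x _
          exact sq_le_sq' (abs_le.1 (hu x)).1 (abs_le.1 (hu x)).2
      _ = M ^ 2 := by simp
  have L1 : ∫ x in (0:ℝ)..1, |u t x| ≤ M := by
    calc ∫ x in (0:ℝ)..1, |u t x| ≤ ∫ x in (0:ℝ)..1, ((2 * M)⁻¹ * (u t x) ^ 2 + M / 2) := by
          apply integral_mono_on (by norm_num) (c1.abs.intervalIntegrable _ _)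
            (Continuous.intervalIntegrable (by fun_prop) _ _)
          intro x _
          have : |u t x| ^ 2 = (u t x) ^ 2 := sq_abs _
          rw [← this]
          field_simp
          nlinarith [sq_nonneg (|u t x| - M)]
      _ = (2 * M)⁻¹ * (∫ x in (0:ℝ)..1, (u t x) ^ 2) + M / 2 := by
          rw [intervalIntegral.integral_add (Continuous.intervalIntegrable (by fun_prop) _ _)
            intervalIntegrable_const, intervalIntegral.integral_const_mul]
          simp
      _ ≤ (2 * M)⁻¹ * M ^ 2 + M / 2 := by gcongr
      _ = M := by field_simp; norm_num
  set F : ℝ → ℝ := fun y => deriv (fun s => u s y) t + u t y * deriv (u t) y with hF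
  have cF : Continuous F := c3.add (c1.mul c2)
  have dF : ∀ y ∈ Icc (0:ℝ) 1, ∀ z ∈ Icc (0:ℝ) 1, |F z - F y| ≤ M := by
    intro y hy z hz
    rw [← integral_eq_sub_of_hasDerivAt (fun x _ => oh_F_deriv h ht x)
      (c1.intervalIntegrable y z)]
    refine (norm_integral_le_abs_integral_norm (f := u t)).trans ?_
    refine le_trans ?_ L1
    refine (abs_integral_mono_interval (c := 0) (d := 1) ?_ ?_ (c1.abs.intervalIntegrable _ _)).trans ?_
    · rw [uIoc_of_le zero_le_one]
      intro w hw
      rw [mem_uIoc] at hw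
      rcases hw with hw | hw
      · exact ⟨hy.1.trans_lt hw.1, hw.2.trans hz.2⟩
      · exact ⟨hz.1.trans_lt hw.1, hw.2.trans hy.2⟩
    · exact Eventually.of_forall fun x => abs_nonneg _
    · rw [abs_of_nonneg]
      exact integral_nonneg zero_le_one fun x _ => abs_nonneg _
  have bF : ∀ z ∈ Icc (0:ℝ) 1, |F z| ≤ M := by
    intro z hz
    have e : ∫ y in (0:ℝ)..1, (F z - F y) = F z := by
      rw [intervalIntegral.integral_sub intervalIntegrable_const (cF.intervalIntegrable _ _)]
      have : ∫ y in (0:ℝ)..1, F y = 0 := oh_mean_F h ht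
      simp [this]
    rw [← e]
    have := norm_integral_le_of_norm_le_const (a := (0:ℝ)) (b := 1) (C := M)
      (f := fun y => F z - F y) (fun y hy => by
        rw [uIoc_of_le zero_le_one] at hy
        exact dF y ⟨hy.1.le, hy.2⟩ z hz)
    simpa using this
  have pF : Function.Periodic F 1 := by
    intro y
    simp only [hF]
    rw [oh_ut_per h ht, oh_ux_per h hI, h.periodic t hI]
  obtain ⟨y, hy, hxy⟩ := pF.exists_mem_Ico₀ one_pos x
  change |F x| ≤ M
  rw [hxy]
  exact bF y ⟨hy.1, hy.2.le⟩

lemma oh_bdd {τ : ℝ} {g : ℝ → ℝ → ℝ}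
    (hc : ContinuousOn (fun z : ℝ × ℝ => g z.1 z.2) (Icc 0 τ ×ˢ univ))
    (hp : ∀ t ∈ Icc 0 τ, ∀ x, g t (x + 1) = g t x) :
    ∃ C : ℝ, 0 ≤ C ∧ ∀ t ∈ Icc 0 τ, ∀ x, |g t x| ≤ C := by
  obtain ⟨C, hC⟩ := (isCompact_Icc.prod (isCompact_Icc (a := (0:ℝ)) (b := 1))
    ).exists_bound_of_continuousOn (hc.mono (prod_mono (Subset.refl _) (subset_univ _)))
  refine ⟨max C 0, le_max_right _ _, fun t ht x => ?_⟩
  have pg : Function.Periodic (g t) 1 := hp t ht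
  obtain ⟨y, hy, hxy⟩ := pg.exists_mem_Ico₀ one_pos x
  rw [hxy]
  exact (hC (t, y) ⟨ht, hy.1, hy.2.le⟩).trans (le_max_left _ _)

/-- Existence of characteristics. -/
lemma oh_char (h : IsPeriodicOHSolution 1 (Ico 0 T) u) {τ : ℝ} (h0 : 0 ≤ τ) (hτ : τ < T)
    (x₀ : ℝ) : ∃ X : ℝ → ℝ, X 0 = x₀ ∧
      ∀ t ∈ Icc 0 τ, HasDerivWithinAt X (u t (X t)) (Icc 0 τ) t := by
  have hsub : Icc 0 τ ⊆ Ico 0 T := fun s hs => ⟨hs.1, hs.2.trans_lt hτ⟩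
  have hsub' : Icc 0 τ ×ˢ (univ : Set ℝ) ⊆ Ico 0 T ×ˢ univ := prod_mono hsub (Subset.refl _)
  obtain ⟨L, hL0, hL⟩ := oh_bdd (h.cont_u.mono hsub') (fun t ht => h.periodic t (hsub ht))
  obtain ⟨K, hK0, hK⟩ := oh_bdd (g := fun t x => deriv (u t) x) (h.cont_ux.mono hsub')
    (fun t ht => oh_ux_per h (hsub ht))
  have hP : IsPicardLindelof u (tmin := 0) (tmax := τ) ⟨0, le_rfl, h0⟩ x₀
      ⟨L * τ, mul_nonneg hL0 h0⟩ 0 ⟨L, hL0⟩ ⟨K, hK0⟩ := by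
    refine ⟨?_, ?_, ?_, ?_⟩
    · intro t ht
      refine LipschitzWith.lipschitzOnWith ?_
      refine lipschitzWith_of_nnnorm_deriv_le (fun x => h.diff_x t (hsub ht) x) ?_
      intro x
      exact_mod_cast hK t ht x
    · intro x _
      exact h.cont_u.comp (f := fun r => (r, x)) (by fun_prop) (fun r hr => ⟨hsub hr, mem_univ _⟩)
    · intro t ht x _
      exact hL t ht x
    · simp only [sub_zero, sub_self, max_eq_left h0, NNReal.coe_zero]
      exact le_rfl
  exact hP.exists_eq_forall_mem_Icc_hasDerivWithinAt₀

/-- Riccati blow-up comparison. -/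
lemma oh_riccati {m : ℝ} (hm : 0 < m) {U V : ℝ → ℝ}
    (cU : ContinuousOn U (Icc 0 (2 / m))) (cV : ContinuousOn V (Icc 0 (2 / m)))
    (hV : ∀ t ∈ Ioo 0 (2 / m), HasDerivAt V (U t - V t ^ 2) t)
    (hV0 : V 0 = -m) (hU : ∀ t ∈ Icc 0 (2 / m), U t < m ^ 2 / 2) : False := by
  have hτ : 0 < 2 / m := by positivity
  have hpos : ∀ t, t < 2 / m → 0 < 1 / m - t / 2 := by
    intro t ht
    have : 1 / m = (2 / m) / 2 := by ring
    linarith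
  have hVr : ∀ t ∈ Ico 0 (2 / m), HasDerivWithinAt V (U t - V t ^ 2) (Ici t) t := by
    intro t ht
    rcases ht.1.eq_or_lt with h0 | h0
    · subst h0
      refine hasDerivWithinAt_Ici_of_tendsto_deriv (s := Ioo 0 (2 / m)) ?_ ?_
        (Ioo_mem_nhdsGT hτ) ?_
      · exact fun s hs => (hV s hs).differentiableAt.differentiableWithinAt
      · exact (cV 0 ⟨le_rfl, hτ.le⟩).mono Ioo_subset_Icc_self
      · have c : ContinuousOn (fun t => U t - V t ^ 2) (Icc 0 (2 / m)) := cU.sub (cV.pow 2)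
        have c0 := ((c 0 ⟨le_rfl, hτ.le⟩).mono Ioo_subset_Icc_self).tendsto
        rw [nhdsWithin_Ioo_eq_nhdsGT hτ] at c0
        refine c0.congr' ?_
        filter_upwards [Ioo_mem_nhdsGT hτ] with s hs
        exact (hV s hs).deriv.symm
    · exact (hV t ⟨h0, ht.2⟩).hasDerivWithinAt
  have dB : ∀ t, t < 2 / m → HasDerivAt (fun s => -(1 / m - s / 2)⁻¹)
      (-((1 / m - t / 2)⁻¹ ^ 2 / 2)) t := by
    intro t ht
    have h1 : HasDerivAt (fun s => 1 / m - s / 2) (-(1 / 2)) t :=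
      ((hasDerivAt_id t).div_const 2).const_sub _
    refine HasDerivAt.congr_deriv (h1.inv (hpos t ht).ne').neg ?_
    have := (hpos t ht).ne'
    rw [inv_pow]
    ring
  have key : ∀ t ∈ Ico 0 (2 / m), V t ≤ -(1 / m - t / 2)⁻¹ := by
    intro b hb
    refine image_le_of_deriv_right_lt_deriv_boundary' (a := 0) (b := b)
      (f' := fun t => U t - V t ^ 2) (B := fun s => -(1 / m - s / 2)⁻¹)
      (B' := fun t => -((1 / m - t / 2)⁻¹ ^ 2 / 2))
      (cV.mono (Icc_subset_Icc le_rfl hb.2.le))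
      (fun t ht => hVr t ⟨ht.1, ht.2.trans hb.2⟩) ?_ ?_ ?_ ?_ ⟨hb.1, le_rfl⟩
    · simp [hV0]
    · intro s hs
      exact (dB s (hs.2.trans_lt hb.2)).continuousAt.continuousWithinAt
    · intro s hs
      exact (dB s (hs.2.trans hb.2)).hasDerivWithinAt
    · intro s hs hVs
      have hs2 := hs.2.trans hb.2
      have h1 := hU s ⟨hs.1, hs2.le⟩
      have h2 : m ≤ (1 / m - s / 2)⁻¹ := by
        rw [le_inv_comm₀ hm (hpos s hs2), ← one_div]
        linarith [hs.1]
      have h3 : V s ^ 2 = (1 / m - s / 2)⁻¹ ^ 2 := by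
        rw [hVs]; ring
      have h4 : m ^ 2 ≤ (1 / m - s / 2)⁻¹ ^ 2 := by gcongr
      change U s - V s ^ 2 < _
      rw [h3]
      linarith
  obtain ⟨C, hC⟩ := isCompact_Icc.exists_bound_of_continuousOn cV
  -- choose a time close to the blow-up time
  set K : ℝ := max C m + 1 with hK
  have hKC : C < K := by linarith [le_max_left C m]
  have hKm : m < K := by linarith [le_max_right C m]
  have hKpos : 0 < K := hm.trans hKm
  have hinv : 1 / K < 1 / m := one_div_lt_one_div_of_lt hm hKm
  have hinv0 : 0 < 1 / K := by positivity
  have e : 2 / m = 2 * (1 / m) := by ring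
  have hmem : 2 / m - 2 / K ∈ Ico 0 (2 / m) := by
    have : 2 / K = 2 * (1 / K) := by ring
    constructor <;> rw [this, e] <;> linarith
  have h1 := key _ hmem
  have e2 : 1 / m - (2 / m - 2 / K) / 2 = 1 / K := by ring
  rw [e2, one_div, inv_inv] at h1
  have h2 := hC _ (Ico_subset_Icc_self hmem)
  rw [Real.norm_eq_abs] at h2
  linarith [(abs_le.1 h2).1]

end sol

/-- Hunter's criterion: with `γ = 1`, if `m³ > 4M(4+m)`, where
`m = -inf u₀'` and `M = sup |u₀|`, then every periodic classical solution with
initial data `u₀` and `u_x` bounded from below on `[0,T) × ℝ` satisfies `T ≤ 2/m`. -/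
theorem hunter_wave_breaking
    (u₀ : ℝ → ℝ) (hreg : ContDiff ℝ 1 u₀) (hper : ∀ x : ℝ, u₀ (x + 1) = u₀ x)
    (m M : ℝ) (hm : m = -(⨅ x : ℝ, deriv u₀ x)) (hM : M = ⨆ x : ℝ, |u₀ x|)
    (hcond : m ^ 3 > 4 * M * (4 + m)) :
    ∀ (T : ℝ) (u : ℝ → ℝ → ℝ),
      IsPeriodicOHSolution 1 (Set.Ico 0 T) u →
      u 0 = u₀ →
      (∃ c : ℝ, ∀ t ∈ Set.Ico (0 : ℝ) T, ∀ x : ℝ, c ≤ deriv (u t) x) →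
      T ≤ 2 / m := by
  intro T u h hu0 _
  have hdc : Continuous (deriv u₀) := hreg.continuous_deriv le_rfl
  have hdp : Function.Periodic (deriv u₀) 1 := by
    intro x
    rw [← deriv_comp_add_const]
    congr 1
    funext y
    exact hper y
  have hup : Function.Periodic u₀ 1 := hper
  have hcomp : IsCompact (range (deriv u₀)) := hdp.compact_of_continuous one_ne_zero hdc
  obtain ⟨x₀, hx₀⟩ : sInf (range (deriv u₀)) ∈ range (deriv u₀) :=
    hcomp.sInf_mem (range_nonempty _)
  have hx₀' : deriv u₀ x₀ = -m := by rw [hx₀, hm, neg_neg]; rfl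
  have hbd : BddAbove (range fun x => |u₀ x|) :=
    (Function.Periodic.compact_of_continuous (f := fun x => |u₀ x|) (c := 1)
      (fun x => by simp only [hper x]) one_ne_zero hreg.continuous.abs).bddAbove
  have hMle : ∀ x, |u₀ x| ≤ M := fun x => by rw [hM]; exact le_ciSup hbd x
  have hM0 : 0 ≤ M := (abs_nonneg _).trans (hMle 0)
  have hmin : ∀ x, -m ≤ deriv u₀ x := by
    intro x
    rw [← hx₀', hx₀]
    exact csInf_le hcomp.bddBelow (mem_range_self x)
  have hm0 : 0 ≤ m := by
    -- Rolle on one period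
    obtain ⟨c, -, hc⟩ := exists_deriv_eq_zero (f := u₀) zero_lt_one hreg.continuous.continuousOn
      (by have := hper 0; rw [zero_add] at this; exact this.symm)
    have := hmin c
    linarith
  have hmpos : 0 < m := by
    rcases hm0.eq_or_lt with h1 | h1
    · exfalso
      rw [← h1] at hcond
      norm_num at hcond
      linarith
    · exact h1
  have hMpos : 0 < M := by
    rcases hM0.eq_or_lt with h1 | h1
    · exfalso
      have hz : u₀ = fun _ => 0 := by
        funext x
        have := hMle x
        rw [← h1] at this
        exact abs_nonpos_iff.1 this
      rw [hz] at hx₀'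
      simp at hx₀'
      exact hmpos.ne' hx₀'
    · exact h1
  by_contra hT
  push Not at hT
  have hτ : 0 < 2 / m := by positivity
  obtain ⟨X, hX0, hX⟩ := oh_char h hτ.le hT x₀
  have hsub : Icc 0 (2 / m) ⊆ Ico 0 T := fun s hs => ⟨hs.1, hs.2.trans_lt hT⟩
  have hXc : ContinuousOn X (Icc 0 (2 / m)) := fun t ht => (hX t ht).continuousWithinAt
  have hpc : ContinuousOn (fun t => (t, X t)) (Icc 0 (2 / m)) := continuousOn_id.prodMk hXc
  have hpm : MapsTo (fun t => (t, X t)) (Icc 0 (2 / m)) (Ico 0 T ×ˢ univ) :=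
    fun t ht => ⟨hsub ht, mem_univ _⟩
  have cU : ContinuousOn (fun t => u t (X t)) (Icc 0 (2 / m)) := h.cont_u.comp hpc hpm
  have cV : ContinuousOn (fun t => deriv (u t) (X t)) (Icc 0 (2 / m)) := h.cont_ux.comp hpc hpm
  have hI : Ioo 0 T ⊆ Ico 0 T := Ioo_subset_Ico_self
  have hI2 : Ioo 0 T ×ˢ (univ : Set ℝ) ⊆ Ico 0 T ×ˢ univ := prod_mono hI (Subset.refl _)
  have hX' : ∀ t ∈ Ioo 0 (2 / m), HasDerivAt X (u t (X t)) t := fun t ht =>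
    (hX t (Ioo_subset_Icc_self ht)).hasDerivAt (Icc_mem_nhds ht.1 ht.2)
  have dU : ∀ t ∈ Ioo 0 (2 / m), HasDerivAt (fun s => u s (X s))
      (deriv (fun s => u s (X t)) t + deriv (u t) (X t) * u t (X t)) t := fun t ht =>
    oh_chain (G := u) (Gt := fun s y => deriv (fun r => u r y) s) (Gx := fun s y => deriv (u s) y)
      ⟨ht.1, ht.2.trans hT⟩ (fun s hs y => (h.diff_t s (hI hs) y).hasDerivAt)
      (fun s hs y => (h.diff_x s (hI hs) y).hasDerivAt) (h.cont_ut.mono hI2) (h.cont_ux.mono hI2)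
      (hX' t ht)
  have dV : ∀ t ∈ Ioo 0 (2 / m), HasDerivAt (fun s => deriv (u s) (X s))
      (u t (X t) - deriv (u t) (X t) ^ 2) t := by
    intro t ht
    have htT : t ∈ Ioo 0 T := ⟨ht.1, ht.2.trans hT⟩
    have := oh_chain (G := fun s y => deriv (u s) y)
      (Gt := fun s y => deriv (fun y => deriv (fun r => u r y) s) y)
      (Gx := fun s y => deriv (deriv (u s)) y)
      htT (fun s hs y => oh_clairaut h hs y)
      (fun s hs y => (h.diff_xx s (hI hs) y).hasDerivAt) (h.cont_utx.mono hI2)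
      (h.cont_uxx.mono hI2) (hX' t ht)
    refine this.congr_deriv ?_
    have e := h.eqn t (hI htT) ht.1 (X t)
    linarith
  refine oh_riccati hmpos cU cV dV ?_ ?_
  · rw [hX0, hu0, hx₀']
  · intro t ht
    have hmain : u t (X t) ≤ M + M * (2 / m) := by
      rcases ht.1.eq_or_lt with h0 | h0
      · rw [← h0, hu0]
        have := (abs_le.1 (hMle (X 0))).2
        have : 0 ≤ M * (2 / m) := by positivity
        linarith
      · obtain ⟨c, hc1, hc2⟩ := exists_hasDerivAt_eq_slope (fun s => u s (X s)) _ h0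
          (cU.mono (Icc_subset_Icc le_rfl ht.2))
          (fun s hs => dU s ⟨hs.1, hs.2.trans_le ht.2⟩)
        have hb := oh_F_bound h hMpos (fun x => by rw [hu0]; exact hMle x)
          (t := c) ⟨hc1.1, (hc1.2.trans_le ht.2).trans hT⟩ (X c)
        rw [mul_comm (u c (X c)), hc2, sub_zero] at hb
        have hb2 := (abs_le.1 hb).2
        rw [div_le_iff₀ h0] at hb2
        have h3 : u 0 (X 0) ≤ M := by rw [hu0]; exact (abs_le.1 (hMle (X 0))).2
        have h4 : M * t ≤ M * (2 / m) := by gcongr; exact ht.2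
        linarith
    refine hmain.trans_lt ?_
    have : M + M * (2 / m) = M * (m + 2) / m := by field_simp
    rw [this, div_lt_iff₀ hmpos]
    nlinarith [mul_pos hMpos hmpos]
end

section
/- Let γ > 0 and let u₀ : ℝ → ℝ be a twice continuously differentiable 1-periodic function with ∫₀¹ u₀(x) dx = 0. If ∫₀¹ (u₀'(x))³ dx < 0 and ‖u₀‖_{L²} > 3γ/4, then wave breaking occurs in finite time: every periodic classical solution u of the Ostrovsky–Hunter equation on [0,T) with u(0,·) = u₀ and with u_x bounded from below on [0,T) × ℝ has T < ∞. -/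
open MeasureTheory Filter Set intervalIntegral


lemma sq_int_le (g : ℝ → ℝ) (hg : Continuous g) :
    (∫ x in (0:ℝ)..1, g x) ^ 2 ≤ ∫ x in (0:ℝ)..1, (g x) ^ 2 := by
  set A := ∫ x in (0:ℝ)..1, g x with hA
  have h0 : 0 ≤ ∫ x in (0:ℝ)..1, (g x - A) ^ 2 :=
    intervalIntegral.integral_nonneg (by norm_num) (fun x _ => sq_nonneg _)
  have h1 : ∫ x in (0:ℝ)..1, (g x - A) ^ 2 = (∫ x in (0:ℝ)..1, (g x)^2) - 2 * A * A + A^2 := by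
    have : ∀ x, (g x - A)^2 = ((g x)^2 - 2 * A * g x) + A^2 := fun x => by ring
    simp_rw [this]
    rw [intervalIntegral.integral_add ((by fun_prop : Continuous _).intervalIntegrable _ _)
        ((by fun_prop : Continuous _).intervalIntegrable _ _),
      intervalIntegral.integral_sub ((by fun_prop : Continuous _).intervalIntegrable _ _)
        ((by fun_prop : Continuous _).intervalIntegrable _ _),
      intervalIntegral.integral_const_mul, intervalIntegral.integral_const]
    simp [← hA]
  nlinarith

lemma poincare (f g : ℝ → ℝ) (hf : ∀ x, HasDerivAt f (g x) x) (hg : Continuous g)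
    (hmean : ∫ x in (0:ℝ)..1, f x = 0) :
    4 * ∫ x in (0:ℝ)..1, (f x) ^ 2 ≤ ∫ x in (0:ℝ)..1, (g x) ^ 2 := by
  have hfc : Continuous f := continuous_iff_continuousAt.2 fun x => (hf x).continuousAt
  obtain ⟨a, ha, hamin⟩ := isCompact_Icc.exists_isMinOn (nonempty_Icc.2 (zero_le_one (α := ℝ)))
    hfc.continuousOn
  obtain ⟨b, hb, hbmax⟩ := isCompact_Icc.exists_isMaxOn (nonempty_Icc.2 (zero_le_one (α := ℝ)))
    hfc.continuousOn
  have hab : f a ≤ f b := hamin hb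
  have hosc : f b - f a ≤ ∫ x in (0:ℝ)..1, |g x| := by
    rw [← intervalIntegral.integral_eq_sub_of_hasDerivAt (fun x _ => hf x)
      (hg.intervalIntegrable _ _)]
    refine (le_abs_self _).trans ?_
    refine (intervalIntegral.norm_integral_le_integral_norm_uIoc (f := g) (μ := volume)).trans ?_
    rw [intervalIntegral.integral_of_le zero_le_one]
    refine setIntegral_mono_set ?_ (ae_of_all _ fun _ => abs_nonneg _) ?_
    · exact (intervalIntegrable_iff_integrableOn_Ioc_of_le zero_le_one).1
        (hg.abs.intervalIntegrable _ _)
    · refine HasSubset.Subset.eventuallyLE ?_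
      rw [uIoc]
      exact Ioc_subset_Ioc (le_min ha.1 hb.1) (max_le ha.2 hb.2)
  have h1 := sq_int_le (fun x => |g x|) hg.abs
  simp only [sq_abs] at h1
  have h2 : ∫ x in (0:ℝ)..1, (f x)^2 ≤ ∫ x in (0:ℝ)..1, ((f a + f b) * f x - f a * f b) := by
    refine intervalIntegral.integral_mono_on zero_le_one
      ((by fun_prop : Continuous _).intervalIntegrable _ _)
      ((by fun_prop : Continuous _).intervalIntegrable _ _) fun x hx => ?_
    have := hamin hx
    have := hbmax hx
    simp only [mem_ofPred_eq] at *
    nlinarith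
  rw [intervalIntegral.integral_sub ((by fun_prop : Continuous _).intervalIntegrable _ _)
        ((by fun_prop : Continuous _).intervalIntegrable _ _),
      intervalIntegral.integral_const_mul, hmean, intervalIntegral.integral_const] at h2
  simp at h2
  nlinarith [sq_nonneg (f a + f b)]

lemma deriv_int (U : Set ℝ) (hU : IsOpen U) (a b : ℝ) (F F' : ℝ → ℝ → ℝ)
    (hF : ∀ t ∈ U, ∀ x ∈ uIcc a b, HasDerivAt (fun s => F s x) (F' t x) t)
    (hc : ContinuousOn (fun p : ℝ × ℝ => F p.1 p.2) (U ×ˢ uIcc a b))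
    (hc' : ContinuousOn (fun p : ℝ × ℝ => F' p.1 p.2) (U ×ˢ uIcc a b))
    (t : ℝ) (ht : t ∈ U) :
    HasDerivAt (fun s => ∫ x in a..b, F s x) (∫ x in a..b, F' t x) t := by
  obtain ⟨ε, hε, hball⟩ := Metric.nhds_basis_closedBall.mem_iff.1 (hU.mem_nhds ht)
  have hK : IsCompact (Metric.closedBall t ε ×ˢ uIcc a b) :=
    (isCompact_closedBall t ε).prod isCompact_uIcc
  obtain ⟨C, hC⟩ := hK.exists_bound_of_continuousOn
    (hc'.mono (prod_mono hball subset_rfl))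
  have sec : ∀ G : ℝ → ℝ → ℝ, ContinuousOn (fun p : ℝ × ℝ => G p.1 p.2) (U ×ˢ uIcc a b) →
      ∀ s ∈ U, ContinuousOn (G s) (uIcc a b) := fun G hG s hs =>
    hG.comp (f := fun x => (s, x)) (by fun_prop) (fun x hx => ⟨hs, hx⟩)
  refine (intervalIntegral.hasDerivAt_integral_of_dominated_loc_of_deriv_le (bound := fun _ => C)
    (Metric.closedBall_mem_nhds t hε) ?_ ?_ ?_ ?_ ?_ ?_).2
  · filter_upwards [hU.mem_nhds ht] with s hs
    exact (sec F hc s hs).intervalIntegrable.aestronglyMeasurable_restrict_uIoc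
  · exact (sec F hc t ht).intervalIntegrable
  · exact (sec F' hc' t ht).intervalIntegrable.aestronglyMeasurable_restrict_uIoc
  · exact ae_of_all _ fun x hx s hs => hC (s, x) ⟨hs, uIoc_subset_uIcc hx⟩
  · exact _root_.intervalIntegrable_const
  · exact ae_of_all _ fun x hx s hs => hF s (hball hs) x (uIoc_subset_uIcc hx)

section
variable {γ : ℝ} {u : ℝ → ℝ → ℝ}

lemma uxt (h : IsPeriodicOHSolution γ (Ici 0) u) (t : ℝ) (ht : 0 < t) (x : ℝ) :
    HasDerivAt (fun s => deriv (u s) x) (deriv (fun y => deriv (fun s => u s y) t) x) t := by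
  have hmem : ∀ s ∈ uIcc t t, True := fun _ _ => trivial
  have hIci : ∀ s : ℝ, 0 < s → ∀ τ ∈ uIcc t s, 0 < τ := fun s hs τ hτ =>
    (lt_min ht hs).trans_le hτ.1
  have key : ∀ s : ℝ, 0 < s → ∀ y, deriv (u s) y = deriv (u t) y
      + ∫ τ in t..s, deriv (fun y => deriv (fun s => u s y) τ) y := by
    intro s hs y
    have e : u s = fun y => u t y + ∫ τ in t..s, deriv (fun s => u s y) τ := by
      funext y
      rw [intervalIntegral.integral_deriv_eq_sub]
      · ring
      · exact fun τ hτ => h.diff_t τ (hIci s hs τ hτ).le y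
      · refine ContinuousOn.intervalIntegrable ?_
        exact h.cont_ut.comp (f := fun τ => (τ, y)) (by fun_prop)
          (fun τ hτ => ⟨(hIci s hs τ hτ).le, mem_univ _⟩)
    have d := deriv_int univ isOpen_univ t s (fun y τ => deriv (fun s => u s y) τ)
      (fun y τ => deriv (fun y => deriv (fun s => u s y) τ) y)
      (fun y _ τ hτ => (h.diff_tx τ (hIci s hs τ hτ).le y).hasDerivAt)
      (h.cont_ut.comp (f := fun p : ℝ × ℝ => (p.2, p.1)) (by fun_prop)
        (fun p hp => ⟨(hIci s hs _ hp.2).le, mem_univ _⟩))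
      (h.cont_utx.comp (f := fun p : ℝ × ℝ => (p.2, p.1)) (by fun_prop)
        (fun p hp => ⟨(hIci s hs _ hp.2).le, mem_univ _⟩)) y (mem_univ y)
    have d2 := (h.diff_x t ht.le y).hasDerivAt.fun_add d
    rw [← d2.deriv]
    exact congrArg (fun f => deriv f y) e
  have hcont : ContinuousOn (fun τ => deriv (fun y => deriv (fun s => u s y) τ) x) (Ioi 0) :=
    h.cont_utx.comp (f := fun τ => (τ, x)) (by fun_prop)
          (fun τ hτ => ⟨mem_Ici.2 (le_of_lt (mem_Ioi.1 hτ)), mem_univ _⟩)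
  have f1 := (intervalIntegral.integral_hasDerivAt_right (a := t) (b := t)
    (f := fun τ => deriv (fun y => deriv (fun s => u s y) τ) x) (by simp)
    (hcont.stronglyMeasurableAtFilter isOpen_Ioi t ht)
    (hcont.continuousAt (Ioi_mem_nhds ht))).const_add (deriv (u t) x)
  refine f1.congr_of_eventuallyEq ?_
  filter_upwards [Ioi_mem_nhds ht] with s hs
  exact key s hs x

lemma per_deriv (f : ℝ → ℝ) (hf : ∀ x, f (x + 1) = f x) (x : ℝ) :
    deriv f (x + 1) = deriv f x := by
  rw [← deriv_comp_add_const]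
  simp_rw [hf]

lemma ut_per (h : IsPeriodicOHSolution γ (Ici 0) u) (t : ℝ) (ht : 0 < t) (x : ℝ) :
    deriv (fun s => u s (x + 1)) t = deriv (fun s => u s x) t := by
  apply Filter.EventuallyEq.deriv_eq
  filter_upwards [Ioi_mem_nhds ht] with s hs
  exact h.periodic s (mem_Ici.2 (le_of_lt (mem_Ioi.1 hs))) x

lemma int_zero (f g : ℝ → ℝ) (hf : ∀ x, HasDerivAt f (g x) x) (hg : Continuous g)
    (h : f 1 = f 0) : ∫ x in (0:ℝ)..1, g x = 0 := by
  rw [intervalIntegral.integral_eq_sub_of_hasDerivAt (fun x _ => hf x)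
      (hg.intervalIntegrable _ _), h, sub_self]

lemma slice {G : ℝ → ℝ → ℝ}
    (hG : ContinuousOn (fun p : ℝ × ℝ => G p.1 p.2) (Ici 0 ×ˢ univ)) (t : ℝ) (ht : 0 < t) :
    Continuous (G t) :=
  hG.comp_continuous (f := fun x => (t, x)) (by fun_prop) (fun x => ⟨ht.le, mem_univ _⟩)

lemma mean_zero (hγ : 0 < γ) (h : IsPeriodicOHSolution γ (Ici 0) u) (t : ℝ) (ht : 0 < t) :
    ∫ x in (0:ℝ)..1, u t x = 0 := by
  have hu : Continuous (u t) := slice h.cont_u t ht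
  have := int_zero (fun x => deriv (fun s => u s x) t + u t x * deriv (u t) x)
    (fun x => γ * u t x) ?_ (by fun_prop) ?_
  · rw [intervalIntegral.integral_const_mul] at this
    exact (mul_eq_zero.1 this).resolve_left hγ.ne'
  · intro x
    refine HasDerivAt.congr_deriv ((h.diff_tx t ht.le x).hasDerivAt.fun_add
      ((h.diff_x t ht.le x).hasDerivAt.fun_mul (h.diff_xx t ht.le x).hasDerivAt)) ?_
    rw [← h.eqn t ht.le ht x]; ring
  · have a := ut_per h t ht 0
    have b := h.periodic t ht.le 0
    have c := per_deriv (u t) (h.periodic t ht.le) 0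
    rw [zero_add] at a b c
    simp only [a, b, c]

lemma energy_deriv (hγ : 0 < γ) (h : IsPeriodicOHSolution γ (Ici 0) u) (t : ℝ) (ht : 0 < t) :
    HasDerivAt (fun s => ∫ x in (0:ℝ)..1, (u s x) ^ 2) 0 t := by
  have sub : Ioi (0:ℝ) ×ˢ uIcc (0:ℝ) 1 ⊆ Ici 0 ×ˢ univ :=
    prod_mono Ioi_subset_Ici_self (subset_univ _)
  have d := deriv_int (Ioi 0) isOpen_Ioi 0 1 (fun s x => (u s x) ^ 2)
    (fun s x => 2 * u s x * deriv (fun s => u s x) s) ?_ ?_ ?_ t ht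
  · convert d using 1
    have hu : Continuous (u t) := slice h.cont_u t ht
    have hux : Continuous (deriv (u t)) := slice (G := fun t => deriv (u t)) h.cont_ux t ht
    have hut : Continuous (fun x => deriv (fun s => u s x) t) :=
      slice (G := fun t x => deriv (fun s => u s x) t) h.cont_ut t ht
    have z1 := int_zero (fun x => (deriv (fun s => u s x) t + u t x * deriv (u t) x)^2 / γ
        - 2 * (u t x)^3 / 3)
      (fun x => 2 * u t x * deriv (fun s => u s x) t) ?_ (by fun_prop) ?_
    · exact z1.symm
    · intro x
      have d1 := (h.diff_tx t ht.le x).hasDerivAt.fun_add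
        ((h.diff_x t ht.le x).hasDerivAt.fun_mul (h.diff_xx t ht.le x).hasDerivAt)
      refine HasDerivAt.congr_deriv (((d1.fun_pow 2).div_const γ).fun_sub
        ((((h.diff_x t ht.le x).hasDerivAt.fun_pow 3).const_mul 2).div_const 3)) ?_
      have e : deriv (fun y => deriv (fun s => u s y) t) x + (deriv (u t) x * deriv (u t) x
        + u t x * deriv (deriv (u t)) x) = γ * u t x := by
        rw [← h.eqn t ht.le ht x]; ring
      rw [e]
      field_simp
      push_cast
      ring
    · have a := ut_per h t ht 0
      have b := h.periodic t ht.le 0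
      have c := per_deriv (u t) (h.periodic t ht.le) 0
      rw [zero_add] at a b c
      simp only [a, b, c]
  · intro s hs x _
    refine HasDerivAt.congr_deriv ((h.diff_t s (mem_Ici.2 (le_of_lt (mem_Ioi.1 hs))) x).hasDerivAt.fun_pow 2) ?_
    norm_num
  · exact (h.cont_u.mono sub).pow 2
  · exact ((h.cont_u.mono sub).const_mul 2).mul (h.cont_ut.mono sub)

lemma energy_const (hγ : 0 < γ) (h : IsPeriodicOHSolution γ (Ici 0) u) (t : ℝ) (ht : 0 < t) :
    ∫ x in (0:ℝ)..1, (u t x) ^ 2 = ∫ x in (0:ℝ)..1, (u 0 x) ^ 2 := by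
  have hc : Continuous (fun p : ℝ × ℝ => (u (max p.1 0) p.2)^2) :=
    (h.cont_u.comp_continuous (f := fun p : ℝ × ℝ => (max p.1 0, p.2)) (by fun_prop)
      (fun p => ⟨mem_Ici.2 (le_max_right _ _), mem_univ _⟩)).pow 2
  have hI : Continuous (fun s => ∫ x in (0:ℝ)..1, (u (max s 0) x)^2) :=
    intervalIntegral.continuous_parametric_intervalIntegral_of_continuous' hc 0 1
  have hI' : ContinuousOn (fun s => ∫ x in (0:ℝ)..1, (u s x) ^ 2) (Icc 0 t) := by
    refine hI.continuousOn.congr fun s hs => ?_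
    simp only [max_eq_left hs.1]
  obtain ⟨c, hc, e⟩ := exists_hasDerivAt_eq_slope _ (fun _ => (0:ℝ)) ht hI'
    (fun s hs => energy_deriv hγ h s hs.1)
  have : t - 0 ≠ 0 := by simpa using ht.ne'
  field_simp at e
  linarith

lemma V_deriv (hγ : 0 < γ) (h : IsPeriodicOHSolution γ (Ici 0) u) (t : ℝ) (ht : 0 < t) :
    ∃ D, HasDerivAt (fun s => ∫ x in (0:ℝ)..1, (deriv (u s) x) ^ 3) D t ∧
      D ≤ (9 / 4) * γ ^ 2 * (∫ x in (0:ℝ)..1, (u 0 x) ^ 2)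
        - 16 * (∫ x in (0:ℝ)..1, (u 0 x) ^ 2) ^ 2 := by
  have sub : Ioi (0:ℝ) ×ˢ uIcc (0:ℝ) 1 ⊆ Ici 0 ×ˢ univ :=
    prod_mono Ioi_subset_Ici_self (subset_univ _)
  have hu : Continuous (u t) := slice h.cont_u t ht
  have hux : Continuous (deriv (u t)) := slice (G := fun t => deriv (u t)) h.cont_ux t ht
  have huxx : Continuous (deriv (deriv (u t))) :=
    slice (G := fun t => deriv (deriv (u t))) h.cont_uxx t ht
  refine ⟨_, deriv_int (Ioi 0) isOpen_Ioi 0 1 (fun s x => (deriv (u s) x) ^ 3)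
    (fun s x => 3 * (deriv (u s) x) ^ 2 * deriv (fun y => deriv (fun s => u s y) s) x)
    ?_ ?_ ?_ t ht, ?_⟩
  · intro s hs x _
    refine HasDerivAt.congr_deriv ((uxt h s hs x).fun_pow 3) ?_
    norm_num
  · exact (h.cont_ux.mono sub).pow 3
  · exact (((h.cont_ux.mono sub).pow 2).const_mul 3).mul (h.cont_utx.mono sub)
  · rw [← energy_const hγ h t ht]
    have z := int_zero (fun x => u t x * (deriv (u t) x)^3)
      (fun x => (deriv (u t) x)^4 + 3 * u t x * (deriv (u t) x)^2 * deriv (deriv (u t)) x)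
      ?_ (by fun_prop) ?_
    · have P := poincare (u t) (deriv (u t)) (fun x => (h.diff_x t ht.le x).hasDerivAt) hux
        (mean_zero hγ h t ht)
      have Q := sq_int_le (fun x => (deriv (u t) x)^2) (by fun_prop)
      have E0 : 0 ≤ ∫ x in (0:ℝ)..1, (u t x) ^ 2 :=
        intervalIntegral.integral_nonneg zero_le_one (fun x _ => sq_nonneg _)
      have key : ∫ x in (0:ℝ)..1,
          (3 * (deriv (u t) x) ^ 2 * deriv (fun y => deriv (fun s => u s y) t) x
            + ((deriv (u t) x)^4 + 3 * u t x * (deriv (u t) x)^2 * deriv (deriv (u t)) x))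
          ≤ ∫ x in (0:ℝ)..1, ((9 / 4) * γ ^ 2 * (u t x)^2 - ((deriv (u t) x)^2)^2) := by
        have hutx : Continuous (fun x => deriv (fun y => deriv (fun s => u s y) t) x) :=
          slice (G := fun t x => deriv (fun y => deriv (fun s => u s y) t) x) h.cont_utx t ht
        refine intervalIntegral.integral_mono_on zero_le_one
          ((by fun_prop : Continuous _).intervalIntegrable _ _)
          ((by fun_prop : Continuous _).intervalIntegrable _ _) fun x hx => ?_
        have e : deriv (fun y => deriv (fun s => u s y) t) x = γ * u t x - (deriv (u t) x) ^ 2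
          - u t x * deriv (deriv (u t)) x := by
          rw [← h.eqn t ht.le ht x]; ring
        rw [e]
        nlinarith [sq_nonneg ((3 / 2) * γ * u t x - (deriv (u t) x)^2)]
      have hutx : Continuous (fun x => deriv (fun y => deriv (fun s => u s y) t) x) :=
          slice (G := fun t x => deriv (fun y => deriv (fun s => u s y) t) x) h.cont_utx t ht
      rw [intervalIntegral.integral_add ((by fun_prop : Continuous _).intervalIntegrable _ _)
        ((by fun_prop : Continuous _).intervalIntegrable _ _), z,
        intervalIntegral.integral_sub ((by fun_prop : Continuous _).intervalIntegrable _ _)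
        ((by fun_prop : Continuous _).intervalIntegrable _ _),
        intervalIntegral.integral_const_mul] at key
      nlinarith
    · intro x
      refine HasDerivAt.congr_deriv ((h.diff_x t ht.le x).hasDerivAt.fun_mul
        ((h.diff_xx t ht.le x).hasDerivAt.fun_pow 3)) ?_
      push_cast
      ring
    · have b := h.periodic t ht.le 0
      have c := per_deriv (u t) (h.periodic t ht.le) 0
      rw [zero_add] at b c
      simp only [b, c]
end

/-- if `∫₀¹ (u₀')³ < 0` and `‖u₀‖_{L²} > 3γ/4`, then no periodic classical
solution with initial data `u₀` and `u_x` bounded from below exists globally in time,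
i.e. every such solution on `[0,T)` has `T < ∞`. -/
theorem wave_breaking_second_criterion
    (γ : ℝ) (hγ : 0 < γ) (u₀ : ℝ → ℝ) (hreg : ContDiff ℝ 2 u₀)
    (hper : ∀ x : ℝ, u₀ (x + 1) = u₀ x)
    (hmean : (∫ x in (0:ℝ)..1, u₀ x) = 0)
    (hcond1 : (∫ x in (0:ℝ)..1, (deriv u₀ x) ^ 3) < 0)
    (hcond2 : Real.sqrt (∫ x in (0:ℝ)..1, (u₀ x) ^ 2) > 3 * γ / 4) :
    ∀ u : ℝ → ℝ → ℝ,
      IsPeriodicOHSolution γ (Set.Ici 0) u →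
      u 0 = u₀ →
      ¬ ∃ c : ℝ, ∀ t ∈ Set.Ici (0 : ℝ), ∀ x : ℝ, c ≤ deriv (u t) x := by
  rintro u h rfl ⟨c, hc⟩
  set E := ∫ x in (0:ℝ)..1, (u 0 x) ^ 2 with hE
  have hE1 : (3 * γ / 4) ^ 2 < E := (Real.lt_sqrt (by positivity)).1 hcond2
  set δ := 16 * E ^ 2 - (9 / 4) * γ ^ 2 * E with hδ
  have hEpos : 0 < E := lt_of_le_of_lt (sq_nonneg _) hE1
  have hδpos : 0 < δ := by
    have : δ = E * (16 * E - (9 / 4) * γ ^ 2) := by rw [hδ]; ring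
    rw [this]
    apply mul_pos hEpos
    nlinarith [sq_nonneg γ]
  set V := fun s => ∫ x in (0:ℝ)..1, (deriv (u s) x) ^ 3 with hV
  have hVd : ∀ t, 0 < t → DifferentiableAt ℝ V t ∧ deriv V t ≤ -δ := by
    intro t ht
    obtain ⟨D, hD, hle⟩ := V_deriv hγ h t ht
    refine ⟨hD.differentiableAt, ?_⟩
    rw [hD.deriv, hδ]
    linarith
  have hlow : ∀ t, 0 < t → c ^ 3 ≤ V t := by
    intro t ht
    have hux : Continuous (deriv (u t)) := slice (G := fun t => deriv (u t)) h.cont_ux t ht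
    have := intervalIntegral.integral_mono_on (f := fun _ => c ^ 3)
      (g := fun x => (deriv (u t) x) ^ 3) (μ := volume) (zero_le_one (α := ℝ))
      ((by fun_prop : Continuous _).intervalIntegrable _ _)
      ((by fun_prop : Continuous _).intervalIntegrable _ _)
      (fun x _ => (Odd.strictMono_pow (by decide : Odd 3)).monotone (hc t ht.le x))
    simpa using this
  have hdec : ∀ T, 1 ≤ T → V T - V 1 ≤ -δ * (T - 1) := by
    intro T hT
    refine Convex.image_sub_le_mul_sub_of_deriv_le (convex_Ici 1)
      (fun s hs => (hVd s (lt_of_lt_of_le one_pos hs)).1.continuousAt.continuousWithinAt)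
      (fun s hs => ?_) (fun s hs => ?_) 1 self_mem_Ici T hT hT
    · exact (hVd s (lt_of_lt_of_le one_pos (interior_subset hs))).1.differentiableWithinAt
    · exact (hVd s (lt_of_lt_of_le one_pos (interior_subset hs))).2
  have h1 := hlow 1 one_pos
  have hT : 1 ≤ 1 + (V 1 - c ^ 3 + 1) / δ := by
    have : 0 ≤ (V 1 - c ^ 3 + 1) / δ := by apply div_nonneg <;> linarith
    linarith
  have h2 := hdec _ hT
  have h3 := hlow _ (one_pos.trans_le hT)
  have h4 : -δ * (1 + (V 1 - c ^ 3 + 1) / δ - 1) = -(V 1 - c ^ 3 + 1) := by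
    field_simp
    ring
  rw [h4] at h2
  linarith
end

section
/- Let γ > 0 and let u be a periodic classical solution of the Ostrovsky–Hunter equation on [0,T) with initial data u₀ satisfying ∫₀¹ u₀(x) dx = 0. Then for every t ∈ (0,T) one has the identity d/dt ∫₀¹ u_x(t,x)³ dx = −2 ∫₀¹ u_x(t,x)⁴ dx + 3γ ∫₀¹ u(t,x) u_x(t,x)² dx. -/
open MeasureTheory Filter Set intervalIntegral

open Topology in
/-- Differentiation under the integral sign on a compact neighbourhood. -/
lemma hasDerivAt_integral_of_compact {F F' : ℝ → ℝ → ℝ} {x₀ a b : ℝ} {s : Set ℝ}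
    (hsc : IsCompact s) (hs : s ∈ 𝓝 x₀)
    (hF : ∀ x ∈ s, ContinuousOn (F x) (uIcc a b))
    (hF' : ContinuousOn (fun p : ℝ × ℝ => F' p.1 p.2) (s ×ˢ uIcc a b))
    (hd : ∀ x ∈ s, ∀ t ∈ uIcc a b, HasDerivAt (fun x => F x t) (F' x t) x) :
    HasDerivAt (fun x => ∫ t in a..b, F x t) (∫ t in a..b, F' x₀ t) x₀ := by
  obtain ⟨C, hC⟩ := (hsc.prod isCompact_uIcc).exists_bound_of_continuousOn hF'
  have hx₀ : x₀ ∈ s := mem_of_mem_nhds hs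
  have hF'x : ContinuousOn (F' x₀) (uIcc a b) :=
    hF'.comp (f := fun t => (x₀, t)) (by fun_prop) (fun t ht => ⟨hx₀, ht⟩)
  refine (intervalIntegral.hasDerivAt_integral_of_dominated_loc_of_deriv_le
    (bound := fun _ => C) hs ?_ ?_ ?_ ?_ ?_ ?_).2
  · filter_upwards [hs] with x hx
    exact (hF x hx).aestronglyMeasurable_of_subset_isCompact isCompact_uIcc measurableSet_uIoc uIoc_subset_uIcc
  · exact (hF x₀ hx₀).intervalIntegrable
  · exact hF'x.aestronglyMeasurable_of_subset_isCompact isCompact_uIcc measurableSet_uIoc uIoc_subset_uIcc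
  · exact Eventually.of_forall fun t ht x hx => hC (x, t) ⟨hx, uIoc_subset_uIcc ht⟩
  · exact intervalIntegrable_const
  · exact Eventually.of_forall fun t ht x hx => hd x hx t (uIoc_subset_uIcc ht)

/-- Interchange of the mixed derivatives: `(u_x)_t = u_tx`. -/
lemma hasDerivAt_ux {γ T : ℝ} {u : ℝ → ℝ → ℝ}
    (h : IsPeriodicOHSolution γ (Set.Ico 0 T) u) {t : ℝ} (ht : t ∈ Ioo 0 T) (x : ℝ) :
    HasDerivAt (fun s => deriv (u s) x)
      (deriv (fun y => deriv (fun s => u s y) t) x) t := by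
  have hsub : ∀ s ∈ Ioo 0 T, uIcc t s ⊆ Ico 0 T := fun s hs =>
    (ordConnected_Ioo.uIcc_subset ht hs).trans Ioo_subset_Ico_self
  have hutx : ContinuousOn (fun τ => deriv (fun y => deriv (fun s => u s y) τ) x) (Ico 0 T) :=
    h.cont_utx.comp (f := fun τ => (τ, x)) (by fun_prop) (fun τ hτ => ⟨hτ, mem_univ _⟩)
  have hut : ∀ y, ContinuousOn (fun τ => deriv (fun s => u s y) τ) (Ico 0 T) := fun y =>
    h.cont_ut.comp (f := fun τ => (τ, y)) (by fun_prop) (fun τ hτ => ⟨hτ, mem_univ _⟩)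
  have key : ∀ s ∈ Ioo 0 T, deriv (u s) x = deriv (u t) x +
      ∫ τ in t..s, deriv (fun y => deriv (fun s => u s y) τ) x := by
    intro s hs
    have h1 : HasDerivAt (fun y => ∫ τ in t..s, deriv (fun s => u s y) τ)
        (∫ τ in t..s, deriv (fun y => deriv (fun s => u s y) τ) x) x := by
      refine hasDerivAt_integral_of_compact
        (F' := fun y τ => deriv (fun y => deriv (fun s => u s y) τ) y)
        (s := Icc (x - 1) (x + 1)) isCompact_Icc
        (Icc_mem_nhds (by linarith) (by linarith)) ?_ ?_ ?_
      · exact fun y _ => (hut y).mono (hsub s hs)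
      · exact h.cont_utx.comp (f := fun p : ℝ × ℝ => (p.2, p.1)) (by fun_prop)
          (fun p hp => ⟨hsub s hs hp.2, mem_univ _⟩)
      · exact fun y _ τ hτ => (h.diff_tx τ (hsub s hs hτ) y).hasDerivAt
    have h2 : u s = fun y => u t y + ∫ τ in t..s, deriv (fun s => u s y) τ := by
      funext y
      rw [intervalIntegral.integral_eq_sub_of_hasDerivAt
        (fun τ hτ => (h.diff_t τ (hsub s hs hτ) y).hasDerivAt)
        ((hut y).mono (hsub s hs)).intervalIntegrable]
      ring
    conv_lhs => rw [h2]
    exact ((h.diff_x t ⟨ht.1.le, ht.2⟩ x).hasDerivAt.add h1).deriv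
  have hFTC : HasDerivAt (fun s => ∫ τ in t..s, deriv (fun y => deriv (fun s => u s y) τ) x)
      (deriv (fun y => deriv (fun s => u s y) t) x) t :=
    intervalIntegral.integral_hasDerivAt_right (by simp)
      ((hutx.mono Ioo_subset_Ico_self).stronglyMeasurableAtFilter isOpen_Ioo t ht)
      (hutx.continuousAt (Ico_mem_nhds ht.1 ht.2))
  refine (hFTC.const_add (deriv (u t) x)).congr_of_eventuallyEq ?_
  filter_upwards [Ioo_mem_nhds ht.1 ht.2] with s hs using key s hs

/-- for every `t ∈ (0,T)`,
`d/dt ∫₀¹ u_x³ dx = -2 ∫₀¹ u_x⁴ dx + 3γ ∫₀¹ u u_x² dx`. -/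
theorem cubic_derivative_identity
    (γ T : ℝ) (hγ : 0 < γ) (u₀ : ℝ → ℝ) (u : ℝ → ℝ → ℝ)
    (hsol : IsPeriodicOHSolution γ (Set.Ico 0 T) u) (h0 : u 0 = u₀)
    (hmean : (∫ x in (0:ℝ)..1, u₀ x) = 0) :
    ∀ t ∈ Set.Ioo (0 : ℝ) T,
      HasDerivAt (fun s => ∫ x in (0:ℝ)..1, (deriv (u s) x) ^ 3)
        (-2 * (∫ x in (0:ℝ)..1, (deriv (u t) x) ^ 4)
          + 3 * γ * ∫ x in (0:ℝ)..1, u t x * (deriv (u t) x) ^ 2) t := by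
  intro t ht
  have htS : t ∈ Ico 0 T := ⟨ht.1.le, ht.2⟩
  obtain ⟨a, ha0, hat⟩ := exists_between ht.1
  obtain ⟨b, htb, hbT⟩ := exists_between ht.2
  have hsub : Icc a b ⊆ Ico 0 T := fun s hs => ⟨ha0.le.trans hs.1, hs.2.trans_lt hbT⟩
  have cx : ∀ s ∈ Ico 0 T, Continuous (deriv (u s)) := fun s hs =>
    continuous_iff_continuousAt.2 fun x => (hsol.diff_xx s hs x).continuousAt
  have cu : Continuous (u t) :=
    continuous_iff_continuousAt.2 fun x => (hsol.diff_x t htS x).continuousAt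
  have cxx : Continuous (deriv (deriv (u t))) := by
    rw [← continuousOn_univ]
    exact hsol.cont_uxx.comp (f := fun x => (t, x)) (by fun_prop) (fun x hx => ⟨htS, hx⟩)
  have hcx := cx t htS
  have main := hasDerivAt_integral_of_compact (x₀ := t) (a := 0) (b := 1) (s := Icc a b)
    (F := fun s x => deriv (u s) x ^ 3)
    (F' := fun s x => 3 * deriv (u s) x ^ 2 * deriv (fun y => deriv (fun s => u s y) s) x)
    isCompact_Icc (Icc_mem_nhds hat htb)
    (fun s hs => ((cx s (hsub hs)).pow 3).continuousOn)
    (by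
      have hm : Icc a b ×ˢ uIcc (0:ℝ) 1 ⊆ Ico 0 T ×ˢ univ := prod_mono hsub (subset_univ _)
      exact (continuousOn_const.mul ((hsol.cont_ux.mono hm).pow 2)).mul (hsol.cont_utx.mono hm))
    (fun s hs x _ => by
      exact ((hasDerivAt_ux hsol ⟨ha0.trans_le hs.1, hs.2.trans_lt hbT⟩ x).fun_pow 3).congr_deriv
        (by norm_num))
  convert main using 1
  have hper : deriv (u t) 1 = deriv (u t) 0 := by
    have h1 : (fun x => u t (x + 1)) = u t := funext (hsol.periodic t htS)
    have h2 := deriv_comp_add_const (u t) 1 0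
    rw [h1] at h2
    simpa using h2.symm
  have hu1 : u t 1 = u t 0 := by simpa using hsol.periodic t htS 0
  have hI : ∫ x in (0:ℝ)..1, (deriv (u t) x ^ 4
      + 3 * (u t x * deriv (u t) x ^ 2 * deriv (deriv (u t)) x)) = 0 := by
    rw [intervalIntegral.integral_eq_sub_of_hasDerivAt (f := fun x => u t x * deriv (u t) x ^ 3)]
    · simp [hper, hu1]
    · intro x _
      have := (hsol.diff_x t htS x).hasDerivAt.mul ((hsol.diff_xx t htS x).hasDerivAt.pow 3)
      refine this.congr_deriv ?_
      simp only [Pi.pow_apply]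
      push_cast
      ring
    · exact Continuous.intervalIntegrable (by fun_prop) _ _
  have e : ∀ x, 3 * deriv (u t) x ^ 2 * deriv (fun y => deriv (fun s => u s y) t) x =
      (-2 * deriv (u t) x ^ 4 + 3 * γ * (u t x * deriv (u t) x ^ 2)) -
      (deriv (u t) x ^ 4 + 3 * (u t x * deriv (u t) x ^ 2 * deriv (deriv (u t)) x)) := by
    intro x
    have := hsol.eqn t htS ht.1 x
    rw [show deriv (fun y => deriv (fun s => u s y) t) x =
      γ * u t x - deriv (u t) x ^ 2 - u t x * deriv (deriv (u t)) x by linarith]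
    ring
  simp only [e]
  rw [intervalIntegral.integral_sub, hI, intervalIntegral.integral_add,
    intervalIntegral.integral_const_mul, intervalIntegral.integral_const_mul]
  · ring
  all_goals exact Continuous.intervalIntegrable (by fun_prop) _ _
end

section
/- Let γ > 0 and let u be a periodic classical solution of the Ostrovsky–Hunter equation on [0,T) with initial data u₀ satisfying ∫₀¹ u₀(x) dx = 0. Then for every t ∈ [0,T), sup_{s ∈ [0,t]} sup_{x ∈ ℝ} |u(s,x)| ≤ ‖u₀‖_{L∞} + γ t ‖u₀‖_{L²}. -/
open MeasureTheory Filter Set intervalIntegral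

lemma oh_cont_integral (b T : ℝ) (hb : 0 ≤ b) (hbT : b < T) (F : ℝ → ℝ → ℝ)
    (hF : ContinuousOn (fun p : ℝ × ℝ => F p.1 p.2) (Set.Ico 0 T ×ˢ (Set.univ : Set ℝ))) :
    ContinuousOn (fun t => ∫ x in (0:ℝ)..1, F t x) (Set.Icc 0 b) := by
  have h1 : Continuous (fun p : ℝ × ℝ => F (max 0 (min p.1 b)) p.2) := by
    have := hF.comp_continuous (f := fun p : ℝ × ℝ => (max 0 (min p.1 b), p.2)) (by fun_prop)
      (by
        intro p
        refine ⟨⟨le_max_left _ _, ?_⟩, trivial⟩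
        exact max_lt (lt_of_le_of_lt hb hbT) (lt_of_le_of_lt (min_le_right _ _) hbT))
    exact this
  have h2 : Continuous (fun t => ∫ x in (0:ℝ)..1, F (max 0 (min t b)) x) :=
    intervalIntegral.continuous_parametric_intervalIntegral_of_continuous' h1 0 1
  refine h2.continuousOn.congr ?_
  intro t ht
  have : max 0 (min t b) = t := by rw [min_eq_left ht.2, max_eq_right ht.1]
  simp only [this]

lemma oh_slice (T t : ℝ) (ht : t ∈ Set.Ico 0 T) (F : ℝ → ℝ → ℝ)
    (hF : ContinuousOn (fun p : ℝ × ℝ => F p.1 p.2) (Set.Ico 0 T ×ˢ (Set.univ : Set ℝ))) :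
    Continuous (F t) :=
  hF.comp_continuous (f := fun x : ℝ => (t, x)) (by fun_prop) (fun _ => ⟨ht, trivial⟩)

lemma oh_deriv_integral (T t : ℝ) (ht : t ∈ Set.Ioo 0 T) (F F' : ℝ → ℝ → ℝ)
    (hF : ContinuousOn (fun p : ℝ × ℝ => F p.1 p.2) (Set.Ico 0 T ×ˢ (Set.univ : Set ℝ)))
    (hF' : ContinuousOn (fun p : ℝ × ℝ => F' p.1 p.2) (Set.Ico 0 T ×ˢ (Set.univ : Set ℝ)))
    (hd : ∀ s ∈ Set.Ico 0 T, ∀ x, HasDerivAt (fun r => F r x) (F' s x) s) :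
    HasDerivAt (fun s => ∫ x in (0:ℝ)..1, F s x) (∫ x in (0:ℝ)..1, F' t x) t := by
  obtain ⟨b, hb1, hb2⟩ := exists_between ht.2
  have hK : IsCompact (Set.Icc 0 b ×ˢ Set.Icc (0:ℝ) 1) := isCompact_Icc.prod isCompact_Icc
  have hsub : (Set.Icc 0 b ×ˢ Set.Icc (0:ℝ) 1) ⊆ Set.Ico 0 T ×ˢ (Set.univ : Set ℝ) := by
    rintro ⟨p, q⟩ ⟨h1, h2⟩
    exact ⟨⟨h1.1, lt_of_le_of_lt h1.2 hb2⟩, trivial⟩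
  obtain ⟨C, hC⟩ := hK.exists_bound_of_continuousOn (hF'.mono hsub)
  have hmem : ∀ s ∈ Set.Ioo 0 b, s ∈ Set.Ico 0 T := fun s hs => ⟨hs.1.le, hs.2.trans hb2⟩
  have hnhds : Set.Ioo 0 b ∈ nhds t := Ioo_mem_nhds ht.1 hb1
  refine (intervalIntegral.hasDerivAt_integral_of_dominated_loc_of_deriv_le (𝕜 := ℝ)
    (μ := volume) (bound := fun _ => C) (s := Set.Ioo 0 b) hnhds ?_ ?_ ?_ ?_ ?_ ?_).2
  · filter_upwards [hnhds] with s hs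
    exact (oh_slice T s (hmem s hs) F hF).aestronglyMeasurable
  · exact (oh_slice T t ⟨ht.1.le, ht.2⟩ F hF).intervalIntegrable _ _
  · exact (oh_slice T t ⟨ht.1.le, ht.2⟩ F' hF').aestronglyMeasurable
  · refine Filter.Eventually.of_forall ?_
    intro x hx s hs
    rw [Set.uIoc_of_le zero_le_one] at hx
    exact hC (s, x) ⟨⟨hs.1.le, hs.2.le⟩, ⟨hx.1.le, hx.2⟩⟩
  · exact intervalIntegrable_const
  · refine Filter.Eventually.of_forall ?_
    intro x hx s hs
    exact hd s (hmem s hs) x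

/-- Maximum principle. -/
lemma oh_max (T b K M : ℝ) (hb : 0 ≤ b) (hbT : b < T) (v : ℝ → ℝ → ℝ)
    (hper : ∀ t ∈ Set.Ico 0 T, ∀ x : ℝ, v t (x + 1) = v t x)
    (hc : ContinuousOn (fun p : ℝ × ℝ => v p.1 p.2) (Set.Ico 0 T ×ˢ (Set.univ : Set ℝ)))
    (hdt : ∀ t ∈ Set.Ico 0 T, ∀ x : ℝ, DifferentiableAt ℝ (fun s => v s x) t)
    (h0 : ∀ x, v 0 x ≤ M)
    (hK : ∀ t ∈ Set.Ioo 0 T, ∀ x : ℝ, deriv (v t) x = 0 → deriv (fun s => v s x) t ≤ K) :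
    ∀ x, v b x ≤ M + K * b := by
  have hmem : ∀ s ∈ Set.Icc 0 b, s ∈ Set.Ico 0 T := fun s hs => ⟨hs.1, hs.2.trans_lt hbT⟩
  have key : ∀ ε > 0, ∀ x, v b x ≤ M + (K + ε) * b := by
    intro ε hε
    have hcomp : IsCompact (Set.Icc 0 b ×ˢ Set.Icc (0:ℝ) 1) := isCompact_Icc.prod isCompact_Icc
    have hsub : (Set.Icc 0 b ×ˢ Set.Icc (0:ℝ) 1) ⊆ Set.Ico 0 T ×ˢ (Set.univ : Set ℝ) := by
      rintro ⟨p, q⟩ ⟨h1, h2⟩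
      exact ⟨hmem p h1, trivial⟩
    have hcw : ContinuousOn (fun p : ℝ × ℝ => v p.1 p.2 - (K + ε) * p.1)
        (Set.Icc 0 b ×ˢ Set.Icc (0:ℝ) 1) :=
      (hc.mono hsub).sub (by fun_prop)
    obtain ⟨⟨t, y⟩, ⟨ht, hy⟩, hmax⟩ := hcomp.exists_isMaxOn
      ⟨((0:ℝ), (0:ℝ)), ⟨⟨le_rfl, hb⟩, ⟨le_rfl, zero_le_one⟩⟩⟩ hcw
    have hmax' : ∀ s ∈ Set.Icc 0 b, ∀ x, v s x - (K + ε) * s ≤ v t y - (K + ε) * t := by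
      intro s hs x
      have hp : Function.Periodic (v s) 1 := hper s (hmem s hs)
      obtain ⟨z, hz, hxz⟩ := hp.exists_mem_Ico₀ one_pos x
      rw [hxz]
      exact hmax (show (s, z) ∈ _ from ⟨hs, ⟨hz.1, hz.2.le⟩⟩)
    simp only at ht hy
    have ht0 : t = 0 := by
      by_contra hne
      have htpos : 0 < t := lt_of_le_of_ne ht.1 (Ne.symm hne)
      have hx0 : deriv (v t) y = 0 := by
        apply IsLocalMax.deriv_eq_zero
        refine Filter.Eventually.of_forall ?_
        intro x
        have := hmax' t ht x
        linarith
      have hle := hK t ⟨htpos, ht.2.trans_lt hbT⟩ y hx0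
      have hD := (hdt t (hmem t ht) y).hasDerivAt
      have hD2 : HasDerivAt (fun s => v s y - (K + ε) * s)
          (deriv (fun s => v s y) t - (K + ε) * 1) t :=
        hD.sub ((hasDerivAt_id t).const_mul (K + ε))
      have hslope := hasDerivWithinAt_iff_tendsto_slope.1 (hD2.hasDerivWithinAt (s := Set.Iio t))
      rw [show Set.Iio t \ {t} = Set.Iio t by simp] at hslope
      have hge : 0 ≤ deriv (fun s => v s y) t - (K + ε) * 1 := by
        refine ge_of_tendsto hslope ?_
        filter_upwards [Ioo_mem_nhdsLT htpos] with s hs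
        have := hmax' s ⟨hs.1.le, hs.2.le.trans ht.2⟩ y
        rw [slope_def_field]
        apply div_nonneg_of_nonpos
        · linarith
        · linarith [hs.2]
      linarith
    intro x
    have h1 := hmax' b ⟨hb, le_rfl⟩ x
    have h2 := h0 y
    rw [ht0] at h1
    linarith
  intro x
  by_contra hcon
  push Not at hcon
  have h1 := key ((v b x - (M + K * b)) / (2 * (b + 1))) (by apply div_pos <;> linarith) x
  set d := v b x - (M + K * b) with hd
  have hdpos : 0 < d := by linarith
  have h2 : d / (2 * (b + 1)) * b ≤ d / 2 := by
    rw [div_mul_eq_mul_div, div_le_div_iff₀ (by linarith) (by norm_num)]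
    nlinarith
  have h3 : M + (K + d / (2 * (b + 1))) * b = M + K * b + d / (2 * (b + 1)) * b := by ring
  linarith

lemma oh_cs (f : ℝ → ℝ) (hf : Continuous f) :
    (∫ x in (0:ℝ)..1, |f x|) ≤ Real.sqrt (∫ x in (0:ℝ)..1, f x ^ 2) := by
  apply Real.le_sqrt_of_sq_le
  set m := ∫ x in (0:ℝ)..1, |f x| with hm
  have h1 : 0 ≤ ∫ x in (0:ℝ)..1, (|f x| - m) ^ 2 :=
    intervalIntegral.integral_nonneg zero_le_one (fun x _ => sq_nonneg _)
  have h2 : (∫ x in (0:ℝ)..1, (|f x| - m) ^ 2)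
      = (∫ x in (0:ℝ)..1, f x ^ 2) - 2 * m * (∫ x in (0:ℝ)..1, |f x|) + m ^ 2 := by
    have : ∀ x, (|f x| - m) ^ 2 = f x ^ 2 - 2 * m * |f x| + m ^ 2 := by
      intro x
      rw [sub_sq, sq_abs]; ring
    simp only [this]
    rw [intervalIntegral.integral_add, intervalIntegral.integral_sub,
      intervalIntegral.integral_const_mul]
    · simp
    all_goals exact Continuous.intervalIntegrable (by fun_prop) _ _
  rw [h2, ← hm] at h1
  nlinarith

/-- A periodic `G` with mean zero and `G' = γ f` is bounded by `γ ‖f‖₂`. -/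
lemma oh_bound (γ : ℝ) (hγ : 0 < γ) (f G : ℝ → ℝ) (hf : Continuous f)
    (hfp : Function.Periodic f 1) (hGp : Function.Periodic G 1)
    (hG : ∀ x, HasDerivAt G (γ * f x) x) (hG0 : (∫ x in (0:ℝ)..1, G x) = 0) (y : ℝ) :
    |G y| ≤ γ * Real.sqrt (∫ x in (0:ℝ)..1, f x ^ 2) := by
  have hGc : Continuous G := continuous_iff_continuousAt.2 fun x => (hG x).continuousAt
  have hH : ∀ x, HasDerivAt (fun z => ∫ w in (0:ℝ)..z, G w) (G x) x := fun x =>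
    intervalIntegral.integral_hasDerivAt_right (hGc.intervalIntegrable _ _)
      (hGc.stronglyMeasurableAtFilter _ _) hGc.continuousAt
  obtain ⟨c, hc, hc0⟩ := exists_hasDerivAt_eq_slope (fun z => ∫ w in (0:ℝ)..z, G w) G
    (zero_lt_one' ℝ) (fun x _ => (hH x).continuousAt.continuousWithinAt) (fun x _ => hH x)
  have hGc0 : G c = 0 := by simpa [hG0] using hc0
  obtain ⟨z, hz, hyz⟩ := hGp.exists_mem_Ico one_pos y c
  rw [hyz]
  have h1 : (∫ x in c..z, γ * f x) = G z - G c :=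
    intervalIntegral.integral_eq_sub_of_hasDerivAt (fun x _ => hG x)
      (Continuous.intervalIntegrable (by fun_prop) _ _)
  have h2 : G z = γ * ∫ x in c..z, f x := by
    rw [← intervalIntegral.integral_const_mul, h1, hGc0, sub_zero]
  have h3 : |∫ x in c..z, f x| ≤ ∫ x in c..z, |f x| :=
    intervalIntegral.abs_integral_le_integral_abs hz.1
  have h4 : (∫ x in c..z, |f x|) ≤ ∫ x in c..(c + 1), |f x| := by
    apply intervalIntegral.integral_mono_interval le_rfl hz.1 hz.2.le
    · exact Filter.Eventually.of_forall fun x => abs_nonneg _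
    · exact hf.abs.intervalIntegrable _ _
  have hap : Function.Periodic (fun x => |f x|) 1 := fun x => by simp [hfp x]
  have h5 : (∫ x in c..(c + 1), |f x|) = ∫ x in (0:ℝ)..1, |f x| := by
    have := hap.intervalIntegral_add_eq c 0
    simpa using this
  rw [h2, abs_mul, abs_of_pos hγ]
  have := oh_cs f hf
  gcongr
  linarith

/-- `sup_{s∈[0,t]} sup_x |u(s,x)| ≤ ‖u₀‖_{L∞} + γ t ‖u₀‖_{L²}`. -/
theorem sup_bound_periodic
    (γ T : ℝ) (hγ : 0 < γ) (u₀ : ℝ → ℝ) (u : ℝ → ℝ → ℝ)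
    (hsol : IsPeriodicOHSolution γ (Set.Ico 0 T) u) (h0 : u 0 = u₀)
    (hmean : (∫ x in (0:ℝ)..1, u₀ x) = 0) :
    ∀ t ∈ Set.Ico (0 : ℝ) T, ∀ s ∈ Set.Icc (0 : ℝ) t, ∀ x : ℝ,
      |u s x| ≤ (⨆ y : ℝ, |u₀ y|) + γ * t * Real.sqrt (∫ x in (0:ℝ)..1, (u₀ x) ^ 2) := by
  have hper : ∀ t ∈ Set.Ico 0 T, Function.Periodic (u t) 1 := hsol.periodic
  have hmem : ∀ t ∈ Set.Ioo 0 T, t ∈ Set.Ico 0 T := fun t ht => ⟨ht.1.le, ht.2⟩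
  -- periodicity of the derivatives
  have hperx : ∀ t ∈ Set.Ico 0 T, Function.Periodic (deriv (u t)) 1 := by
    intro t ht x
    rw [← deriv_comp_add_const (u t) 1 x]
    congr 1
    funext y
    exact hper t ht y
  have hpert : ∀ t ∈ Set.Ioo 0 T, Function.Periodic (fun y => deriv (fun s => u s y) t) 1 := by
    intro t ht x
    apply Filter.EventuallyEq.deriv_eq
    filter_upwards [Ioo_mem_nhds ht.1 ht.2] with s hs
    exact hper s (hmem s hs) x
  set G : ℝ → ℝ → ℝ := fun t y => deriv (fun s => u s y) t + u t y * deriv (u t) y with hGdef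
  have hGper : ∀ t ∈ Set.Ioo 0 T, Function.Periodic (G t) 1 := by
    intro t ht x
    have h1 := hpert t ht x
    simp only at h1
    simp only [hGdef]
    rw [h1, hper t (hmem t ht) x, hperx t (hmem t ht) x]
  have hux : ∀ t ∈ Set.Ico 0 T, ∀ x, HasDerivAt (u t) (deriv (u t) x) x := fun t ht x =>
    (hsol.diff_x t ht x).hasDerivAt
  have hGx : ∀ t ∈ Set.Ioo 0 T, ∀ x, HasDerivAt (G t) (γ * u t x) x := by
    intro t ht x
    have ht' := hmem t ht
    have h1 := (hsol.diff_tx t ht' x).hasDerivAt.add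
      ((hux t ht' x).mul (hsol.diff_xx t ht' x).hasDerivAt)
    refine h1.congr_deriv ?_
    rw [← hsol.eqn t ht' ht.1 x]
    ring
  have hcu : ∀ t ∈ Set.Ico 0 T, Continuous (u t) := fun t ht => oh_slice T t ht u hsol.cont_u
  have hcux : ∀ t ∈ Set.Ico 0 T, Continuous (deriv (u t)) := fun t ht =>
    oh_slice T t ht (fun t x => deriv (u t) x) hsol.cont_ux
  have hcut : ∀ t ∈ Set.Ico 0 T, Continuous (fun y => deriv (fun s => u s y) t) := fun t ht =>
    oh_slice T t ht (fun t y => deriv (fun s => u s y) t) hsol.cont_ut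
  -- zero mean
  have hmean0 : ∀ t ∈ Set.Ioo 0 T, (∫ x in (0:ℝ)..1, u t x) = 0 := by
    intro t ht
    have hc := hcu t (hmem t ht)
    have h1 : (∫ x in (0:ℝ)..1, γ * u t x) = G t 1 - G t 0 :=
      intervalIntegral.integral_eq_sub_of_hasDerivAt (fun x _ => hGx t ht x)
        (Continuous.intervalIntegrable (by fun_prop) _ _)
    have h2 : G t 1 = G t 0 := by simpa using hGper t ht 0
    rw [intervalIntegral.integral_const_mul, h2, sub_self] at h1
    exact (mul_eq_zero.1 h1).resolve_left hγ.ne'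
  have hmeant : ∀ t ∈ Set.Ioo 0 T, (∫ x in (0:ℝ)..1, deriv (fun s => u s x) t) = 0 := by
    intro t ht
    have h1 := oh_deriv_integral T t ht u (fun t y => deriv (fun s => u s y) t) hsol.cont_u
      hsol.cont_ut (fun s hs x => (hsol.diff_t s hs x).hasDerivAt)
    have h2 : HasDerivAt (fun s => ∫ x in (0:ℝ)..1, u s x) 0 t := by
      refine (hasDerivAt_const t (0:ℝ)).congr_of_eventuallyEq ?_
      filter_upwards [Ioo_mem_nhds ht.1 ht.2] with s hs
      exact hmean0 s hs
    exact h1.unique h2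
  have hmeanG : ∀ t ∈ Set.Ioo 0 T, (∫ x in (0:ℝ)..1, G t x) = 0 := by
    intro t ht
    have ht' := hmem t ht
    have hc1 := hcu t ht'
    have hc2 := hcux t ht'
    have hc3 := hcut t ht'
    have h1 : (∫ x in (0:ℝ)..1, u t x * deriv (u t) x) = u t 1 ^ 2 / 2 - u t 0 ^ 2 / 2 := by
      refine intervalIntegral.integral_eq_sub_of_hasDerivAt (f := fun x => u t x ^ 2 / 2)
        (fun x _ => ?_) (Continuous.intervalIntegrable (by fun_prop) _ _)
      refine (((hux t ht' x).pow 2).div_const 2).congr_deriv ?_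
      push_cast
      ring
    have h2 : u t 1 = u t 0 := by simpa using hper t ht' 0
    simp only [hGdef]
    have hi : IntervalIntegrable (fun x => u t x * deriv (u t) x) volume 0 1 :=
      Continuous.intervalIntegrable (by fun_prop) _ _
    rw [intervalIntegral.integral_add (hc3.intervalIntegrable _ _) hi, hmeant t ht, h1, h2]
    ring
  -- conservation of the L² norm
  have hE' : ∀ t ∈ Set.Ioo 0 T, HasDerivAt (fun s => ∫ x in (0:ℝ)..1, u s x ^ 2) 0 t := by
    intro t ht
    have ht' := hmem t ht
    have hc1 := hcu t ht'
    have hc2 := hcux t ht'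
    have hc3 := hcut t ht'
    have h1 := oh_deriv_integral T t ht (fun t x => u t x ^ 2)
      (fun t y => 2 * u t y * deriv (fun s => u s y) t) (hsol.cont_u.pow 2)
      ((continuousOn_const.mul hsol.cont_u).mul hsol.cont_ut)
      (fun s hs x => by
        refine ((hsol.diff_t s hs x).hasDerivAt.pow 2).congr_deriv ?_
        push_cast
        ring)
    refine h1.congr_deriv ?_
    have h2 : (∫ x in (0:ℝ)..1, γ * (2 * u t x * deriv (fun s => u s x) t))
        = (G t 1 ^ 2 - γ * 2 / 3 * u t 1 ^ 3) - (G t 0 ^ 2 - γ * 2 / 3 * u t 0 ^ 3) := by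
      refine intervalIntegral.integral_eq_sub_of_hasDerivAt
        (f := fun x => G t x ^ 2 - γ * 2 / 3 * u t x ^ 3)
        (fun x _ => ?_) (Continuous.intervalIntegrable (by fun_prop) _ _)
      refine (((hGx t ht x).pow 2).sub (((hux t ht' x).pow 3).const_mul (γ * 2 / 3))).congr_deriv ?_
      simp only [hGdef]
      push_cast
      ring
    have h3 : u t 1 = u t 0 := by simpa using hper t ht' 0
    have h4 : G t 1 = G t 0 := by simpa using hGper t ht 0
    rw [intervalIntegral.integral_const_mul, h3, h4, sub_self] at h2
    exact (mul_eq_zero.1 h2).resolve_left hγ.ne'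
  have hE : ∀ t ∈ Set.Ioo 0 T, (∫ x in (0:ℝ)..1, u t x ^ 2) = ∫ x in (0:ℝ)..1, u₀ x ^ 2 := by
    intro t ht
    obtain ⟨c, hc, hc0⟩ := exists_hasDerivAt_eq_slope (fun s => ∫ x in (0:ℝ)..1, u s x ^ 2)
      (fun _ => 0) ht.1
      (oh_cont_integral t T ht.1.le ht.2 (fun t x => u t x ^ 2) (hsol.cont_u.pow 2))
      (fun s hs => hE' s ⟨hs.1, hs.2.trans ht.2⟩)
    have := (div_eq_zero_iff.1 hc0.symm).resolve_right (by linarith [ht.1])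
    rw [← h0]
    linarith
  set L := Real.sqrt (∫ x in (0:ℝ)..1, u₀ x ^ 2) with hL
  have hGb : ∀ t ∈ Set.Ioo 0 T, ∀ x, |G t x| ≤ γ * L := by
    intro t ht x
    have := oh_bound γ hγ (u t) (G t) (hcu t (hmem t ht)) (hper t (hmem t ht)) (hGper t ht)
      (hGx t ht) (hmeanG t ht) x
    rwa [hE t ht] at this
  intro t ht s hs x
  have hs' : s < T := hs.2.trans_lt ht.2
  have h0T : (0:ℝ) ∈ Set.Ico 0 T := ⟨le_rfl, hs.1.trans_lt hs'⟩
  have hM : ∀ y, |u 0 y| ≤ ⨆ y : ℝ, |u₀ y| := by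
    intro y
    rw [← h0]
    refine le_ciSup (f := fun y => |u 0 y|) ?_ y
    obtain ⟨C, hC⟩ := isCompact_Icc.exists_bound_of_continuousOn
      (s := Set.Icc (0:ℝ) 1) (hcu 0 h0T).continuousOn
    refine ⟨C, ?_⟩
    rintro _ ⟨w, rfl⟩
    obtain ⟨z, hz, hwz⟩ := (hper 0 h0T).exists_mem_Ico₀ one_pos w
    simp only [hwz]
    exact hC z ⟨hz.1, hz.2.le⟩
  have hup := oh_max T s (γ * L) (⨆ y : ℝ, |u₀ y|) hs.1 hs' u hsol.periodic hsol.cont_u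
    hsol.diff_t (fun y => (le_abs_self _).trans (hM y))
    (by
      intro r hr y hy
      have h1 := (le_abs_self _).trans (hGb r hr y)
      simp only [hGdef, hy] at h1
      linarith) x
  have hlo := oh_max T s (γ * L) (⨆ y : ℝ, |u₀ y|) hs.1 hs' (fun r y => - u r y)
    (fun r hr y => by rw [hsol.periodic r hr y]) hsol.cont_u.neg
    (fun r hr y => (hsol.diff_t r hr y).neg) (fun y => (neg_le_abs _).trans (hM y))
    (by
      intro r hr y hy
      have h1 := (neg_le_abs _).trans (hGb r hr y)
      have hy' : deriv (u r) y = 0 := by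
        have h2 := ((hux r (hmem r hr) y).neg).deriv
        have h3 : deriv (fun y => - u r y) y = - deriv (u r) y := h2
        linarith
      have h4 : deriv (fun s => - u s y) r = - deriv (fun s => u s y) r :=
        ((hsol.diff_t r (hmem r hr) y).hasDerivAt.neg).deriv
      simp only [hGdef, hy'] at h1
      rw [h4]
      linarith) x
  have hst : γ * L * s ≤ γ * t * L := by
    have : 0 ≤ γ * L := mul_nonneg hγ.le (Real.sqrt_nonneg _)
    have := mul_le_mul_of_nonneg_left hs.2 this
    linarith
  rw [abs_le]
  constructor
  · linarith
  · linarith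
end

section
/- Let γ > 0 and let u₀ : ℝ → ℝ be a twice continuously differentiable 1-periodic function with ∫₀¹ u₀(x) dx = 0 satisfying |inf_{x∈ℝ} u₀'(x)| ≥ |sup_{x∈ℝ} u₀'(x)| > 0. Then for all sufficiently large positive integers n, the initial data x ↦ u₀(nx) leads to finite-time wave breaking: every periodic classical solution u of the Ostrovsky–Hunter equation on [0,T) with u(0,x) = u₀(nx) and with u_x bounded from below on [0,T) × ℝ has T < ∞. -/
open MeasureTheory Filter Set intervalIntegral

lemma oh_periodic_ux {γ : ℝ} {u : ℝ → ℝ → ℝ} (h : IsPeriodicOHSolution γ (Set.Ici 0) u)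
    {t : ℝ} (ht : 0 ≤ t) : Function.Periodic (deriv (u t)) 1 := by
  intro x
  have e : (fun y => u t (y + 1)) = u t := funext (h.periodic t ht)
  have := deriv_comp_add_const (u t) 1 x
  rw [e] at this
  exact this.symm

lemma oh_periodic_ut {γ : ℝ} {u : ℝ → ℝ → ℝ} (h : IsPeriodicOHSolution γ (Set.Ici 0) u)
    {t : ℝ} (ht : 0 < t) (x : ℝ) :
    deriv (fun s => u s (x + 1)) t = deriv (fun s => u s x) t := by
  apply Filter.EventuallyEq.deriv_eq
  filter_upwards [lt_mem_nhds ht] with s hs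
  exact h.periodic s hs.le x

lemma oh_w_deriv {γ : ℝ} {u : ℝ → ℝ → ℝ} (h : IsPeriodicOHSolution γ (Set.Ici 0) u)
    {t : ℝ} (ht : 0 < t) (x : ℝ) :
    HasDerivAt (fun y => deriv (fun s => u s y) t + u t y * deriv (u t) y) (γ * u t x) x := by
  have h1 := (h.diff_tx t ht.le x).hasDerivAt
  have h2 := (h.diff_x t ht.le x).hasDerivAt
  have h3 := (h.diff_xx t ht.le x).hasDerivAt
  have h4 := h1.add (h2.mul h3)
  have h5 := h.eqn t ht.le ht x
  refine h4.congr_deriv ?_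
  rw [← h5]; ring

lemma oh_exists_zero {γ : ℝ} (hγ : 0 < γ) {u : ℝ → ℝ → ℝ}
    (h : IsPeriodicOHSolution γ (Set.Ici 0) u) {t : ℝ} (ht : 0 < t) :
    ∃ z ∈ Ioo (0:ℝ) 1, u t z = 0 := by
  obtain ⟨z, hz, hz0⟩ := exists_hasDerivAt_eq_zero
    (f := fun y => deriv (fun s => u s y) t + u t y * deriv (u t) y)
    (f' := fun y => γ * u t y) (a := 0) (b := 1) zero_lt_one
    (fun x _ => (oh_w_deriv h ht x).continuousAt.continuousWithinAt)
    (by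
      have e1 := oh_periodic_ut h ht 0
      have e2 := oh_periodic_ux h ht.le 0
      have e3 := h.periodic t ht.le 0
      simp only [zero_add] at e1 e2 e3
      simp only [e1, e2, e3])
    (fun x _ => oh_w_deriv h ht x)
  refine ⟨z, hz, ?_⟩
  rcases mul_eq_zero.1 hz0 with h' | h'
  · exact absurd h' hγ.ne'
  · exact h'

lemma deriv_nonneg_of_left_max {f : ℝ → ℝ} {f' a : ℝ} (ha : 0 < a) (hf : HasDerivAt f f' a)
    (hm : ∀ s, 0 ≤ s → s ≤ a → f s ≤ f a) : 0 ≤ f' := by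
  have := hf.tendsto_slope_zero_left
  refine ge_of_tendsto this ?_
  have h1 : ∀ᶠ k : ℝ in nhdsWithin 0 (Iio 0), -a < k :=
    mem_nhdsWithin_of_mem_nhds (lt_mem_nhds (by linarith))
  filter_upwards [h1, self_mem_nhdsWithin] with k hk hk0
  have hk0 : k < 0 := hk0
  have := hm (a + k) (by linarith) (by linarith)
  rw [smul_eq_mul]
  exact mul_nonneg_of_nonpos_of_nonpos (inv_nonpos.2 hk0.le) (by linarith)

/-- The oscillation in `x` grows at most exponentially. -/
lemma oh_osc {γ : ℝ} (hγ : 0 < γ) {u : ℝ → ℝ → ℝ}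
    (h : IsPeriodicOHSolution γ (Set.Ici 0) u) {M : ℝ} (hM : ∀ x, |u 0 x| ≤ M)
    {t : ℝ} (ht : t ∈ Icc (0:ℝ) 1) (x y : ℝ) (hx : x ∈ Icc (0:ℝ) 1) (hy : y ∈ Icc (0:ℝ) 1) :
    u t x - u t y ≤ Real.exp (2 * γ) * (2 * M) := by
  have hM0 : 0 ≤ M := (abs_nonneg _).trans (hM 0)
  let K : Set (ℝ × ℝ × ℝ) := Icc (0:ℝ) 1 ×ˢ (Icc (0:ℝ) 1 ×ˢ Icc (0:ℝ) 1)
  have hK : IsCompact K := isCompact_Icc.prod (isCompact_Icc.prod isCompact_Icc)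
  let F : ℝ × ℝ × ℝ → ℝ := fun p => Real.exp (-(2 * γ) * p.1) * (u p.1 p.2.1 - u p.1 p.2.2)
  have hc1 : ContinuousOn (fun p : ℝ × ℝ × ℝ => u p.1 p.2.1) K :=
    h.cont_u.comp (f := fun p : ℝ × ℝ × ℝ => (p.1, p.2.1)) (by fun_prop)
      (fun p hp => ⟨hp.1.1, mem_univ _⟩)
  have hc2 : ContinuousOn (fun p : ℝ × ℝ × ℝ => u p.1 p.2.2) K :=
    h.cont_u.comp (f := fun p : ℝ × ℝ × ℝ => (p.1, p.2.2)) (by fun_prop)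
      (fun p hp => ⟨hp.1.1, mem_univ _⟩)
  have hF : ContinuousOn F K :=
    ContinuousOn.mul (Continuous.continuousOn (by fun_prop)) (hc1.sub hc2)
  obtain ⟨⟨t', x', y'⟩, hp, hmax⟩ := hK.exists_isMaxOn ⟨(t, x, y), ht, hx, hy⟩ hF
  have hmax' : ∀ s ∈ Icc (0:ℝ) 1, ∀ a b : ℝ, Real.exp (-(2 * γ) * s) * (u s a - u s b) ≤
      Real.exp (-(2 * γ) * t') * (u t' x' - u t' y') := by
    intro s hs a b
    obtain ⟨a', ha', ea⟩ := Function.Periodic.exists_mem_Ico₀ (f := u s) (c := 1)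
      (h.periodic s hs.1) one_pos a
    obtain ⟨b', hb', eb⟩ := Function.Periodic.exists_mem_Ico₀ (f := u s) (c := 1)
      (h.periodic s hs.1) one_pos b
    rw [ea, eb]
    exact hmax (a := (s, a', b')) ⟨hs, Ico_subset_Icc_self ha', Ico_subset_Icc_self hb'⟩
  obtain ⟨ht', hx', hy'⟩ : t' ∈ Icc (0:ℝ) 1 ∧ x' ∈ Icc (0:ℝ) 1 ∧ y' ∈ Icc (0:ℝ) 1 := hp
  -- the maximal value is at most `2 M`
  have key : Real.exp (-(2 * γ) * t') * (u t' x' - u t' y') ≤ 2 * M := by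
    rcases ht'.1.eq_or_lt with h0 | hpos
    · rw [← h0]
      have := abs_le.1 (hM x')
      have := abs_le.1 (hM y')
      simp; linarith
    · by_contra! hcon
      have hE := Real.exp_pos (-(2 * γ) * t')
      have hosc : 0 < u t' x' - u t' y' := by
        by_contra! hle
        have := mul_nonpos_of_nonneg_of_nonpos hE.le hle
        linarith
      have hsp : ∀ a b : ℝ, u t' a - u t' b ≤ u t' x' - u t' y' := fun a b =>
        le_of_mul_le_mul_left (hmax' t' ht' a b) hE
      obtain ⟨z, -, hz⟩ := oh_exists_zero hγ h hpos
      have hbd : ∀ a, |u t' a| ≤ u t' x' - u t' y' := by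
        intro a
        have h1 := hsp a z
        have h2 := hsp z a
        rw [hz] at h1 h2
        exact abs_le.2 ⟨by linarith, by linarith⟩
      have hx0 : deriv (u t') x' = 0 := by
        apply IsLocalMax.deriv_eq_zero
        exact Filter.Eventually.of_forall fun a => by have := hsp a y'; linarith
      have hy0 : deriv (u t') y' = 0 := by
        apply IsLocalMin.deriv_eq_zero
        exact Filter.Eventually.of_forall fun a => by have := hsp x' a; linarith
      have hd1 := (h.diff_t t' hpos.le x').hasDerivAt
      have hd2 := (h.diff_t t' hpos.le y').hasDerivAt
      have hd3 : HasDerivAt (fun s : ℝ => Real.exp (-(2 * γ) * s))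
          (Real.exp (-(2 * γ) * t') * (-(2 * γ))) t' := by
        simpa using ((hasDerivAt_id t').const_mul (-(2 * γ))).exp
      have hd := hd3.mul (hd1.sub hd2)
      have hnn := deriv_nonneg_of_left_max hpos hd
        (fun s hs hs' => hmax' s ⟨hs, hs'.trans ht'.2⟩ x' y')
      have hw : |(deriv (fun s => u s x') t' + u t' x' * deriv (u t') x') -
          (deriv (fun s => u s y') t' + u t' y' * deriv (u t') y')| ≤
          (γ * (u t' x' - u t' y')) * |x' - y'| := by
        have := Convex.norm_image_sub_le_of_norm_hasDerivWithin_le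
          (f := fun y => deriv (fun s => u s y) t' + u t' y * deriv (u t') y)
          (f' := fun y => γ * u t' y) (s := univ) (C := γ * (u t' x' - u t' y'))
          (x := y') (y := x')
          (fun a _ => (oh_w_deriv h hpos a).hasDerivWithinAt)
          (fun a _ => by
            rw [Real.norm_eq_abs, abs_mul, abs_of_pos hγ]
            exact mul_le_mul_of_nonneg_left (hbd a) hγ.le)
          convex_univ (mem_univ _) (mem_univ _)
        simpa [Real.norm_eq_abs] using this
      rw [hx0, hy0] at hw
      have hxy : |x' - y'| ≤ 1 := abs_le.2 ⟨by linarith [hx'.1, hy'.2], by linarith [hx'.2, hy'.1]⟩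
      have hw2 := (le_abs_self _).trans hw
      have hgo : 0 < γ * (u t' x' - u t' y') := mul_pos hγ hosc
      have hw3 : deriv (fun s => u s x') t' - deriv (fun s => u s y') t' ≤
          γ * (u t' x' - u t' y') := by nlinarith
      have : 0 ≤ Real.exp (-(2 * γ) * t') * (-(2 * γ) * (u t' x' - u t' y') +
          (deriv (fun s => u s x') t' - deriv (fun s => u s y') t')) := by
        refine hnn.trans_eq ?_
        simp only [Pi.sub_apply]
        ring
      have := nonneg_of_mul_nonneg_right this hE
      linarith
  have h1 := (hmax' t ht x y).trans key
  have h2 : Real.exp (2 * γ * t) * Real.exp (-(2 * γ) * t) = 1 := by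
    rw [← Real.exp_add]; simp
  have h3 : u t x - u t y ≤ Real.exp (2 * γ * t) * (2 * M) := by
    calc u t x - u t y = Real.exp (2 * γ * t) * (Real.exp (-(2 * γ) * t) * (u t x - u t y)) := by
          rw [← mul_assoc, h2, one_mul]
      _ ≤ _ := mul_le_mul_of_nonneg_left h1 (Real.exp_pos _).le
  refine h3.trans (mul_le_mul_of_nonneg_right (Real.exp_le_exp.2 ?_) (by linarith))
  nlinarith [ht.2]

lemma oh_bound_s10 {γ : ℝ} (hγ : 0 < γ) {u : ℝ → ℝ → ℝ}
    (h : IsPeriodicOHSolution γ (Set.Ici 0) u) {M : ℝ} (hM : ∀ x, |u 0 x| ≤ M)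
    {t : ℝ} (ht : t ∈ Icc (0:ℝ) 1) (x : ℝ) :
    u t x ≤ Real.exp (2 * γ) * (2 * M) := by
  have hM0 : 0 ≤ M := (abs_nonneg _).trans (hM 0)
  rcases ht.1.eq_or_lt with h0 | hpos
  · rw [← h0]
    have h1 := (le_abs_self _).trans (hM x)
    have h2 : 1 ≤ Real.exp (2 * γ) := Real.one_le_exp (by linarith)
    nlinarith
  · obtain ⟨z, hz, hz0⟩ := oh_exists_zero hγ h hpos
    obtain ⟨a, ha, ea⟩ := Function.Periodic.exists_mem_Ico₀ (f := u t) (c := 1)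
      (h.periodic t ht.1) one_pos x
    have := oh_osc hγ h hM ht a z (Ico_subset_Icc_self ha) (Ioo_subset_Icc_self hz)
    rw [ea]; linarith

/-- Increment of `u_x` in time, in terms of an upper bound for `u_tx`. -/
lemma oh_ux_incr {γ : ℝ} {u : ℝ → ℝ → ℝ}
    (h : IsPeriodicOHSolution γ (Set.Ici 0) u) {t k δ C x : ℝ} (ht : 0 ≤ t) (hk : 0 < k)
    (hδ : 0 < δ)
    (hC : ∀ s ∈ Ioo t (t + k), ∀ y ∈ Ioo x (x + δ),
      deriv (fun y => deriv (fun s => u s y) s) y ≤ C) :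
    deriv (u (t + k)) x ≤ deriv (u t) x + C * k := by
  have hd := (h.diff_x (t + k) (by simp only [mem_Ici]; linarith) x).hasDerivAt.sub
    (h.diff_x t ht x).hasDerivAt
  have hlim := hd.tendsto_slope_zero_right
  suffices deriv (u (t + k)) x - deriv (u t) x ≤ C * k by linarith
  refine le_of_tendsto hlim ?_
  filter_upwards [mem_nhdsWithin_of_mem_nhds (gt_mem_nhds hδ), self_mem_nhdsWithin] with l hl hl0
  have hl0 : 0 < l := hl0
  -- mean value theorem in time
  obtain ⟨s, hs, hs'⟩ := exists_hasDerivAt_eq_slope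
    (fun s => u s (x + l) - u s x)
    (fun s => deriv (fun s => u s (x + l)) s - deriv (fun s => u s x) s)
    (show t < t + k by linarith)
    (fun s hs => ((h.diff_t s (ht.trans hs.1) (x + l)).sub
      (h.diff_t s (ht.trans hs.1) x)).continuousAt.continuousWithinAt)
    (fun s hs => (h.diff_t s (ht.trans hs.1.le) (x + l)).hasDerivAt.sub
      (h.diff_t s (ht.trans hs.1.le) x).hasDerivAt)
  have hs0 : 0 ≤ s := ht.trans hs.1.le
  -- mean value theorem in space
  obtain ⟨y, hy, hy'⟩ := exists_hasDerivAt_eq_slope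
    (fun y => deriv (fun s => u s y) s)
    (fun y => deriv (fun y => deriv (fun s => u s y) s) y)
    (show x < x + l by linarith)
    (fun y _ => (h.diff_tx s hs0 y).continuousAt.continuousWithinAt)
    (fun y _ => (h.diff_tx s hs0 y).hasDerivAt)
  have hb := hC s hs y ⟨hy.1, hy.2.trans (by linarith)⟩
  simp only [Pi.sub_apply, smul_eq_mul]
  rw [hy'] at hb
  simp only [add_sub_cancel_left] at hb hs'
  rw [hs', div_div, div_le_iff₀ (by positivity)] at hb
  rw [inv_mul_le_iff₀ hl0]
  linarith

lemma oh_barrier {γ : ℝ} (hγ : 0 < γ) {u : ℝ → ℝ → ℝ}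
    (h : IsPeriodicOHSolution γ (Set.Ici 0) u) {A T τ : ℝ} (hT : 0 < T) (hT1 : T ≤ 1)
    (hA : ∀ t ∈ Icc (0:ℝ) 1, ∀ x, u t x ≤ A) (hAT : γ * A < 2 / T ^ 2)
    {x₀ : ℝ} (hx₀ : deriv (u 0) x₀ ≤ -(2 / T)) (hτ0 : 0 ≤ τ) (hτ : τ < T) :
    ∃ x, deriv (u τ) x ≤ -(2 / (T - τ)) := by
  let S : Set ℝ := {t | ∃ x ∈ Icc (0:ℝ) 1, deriv (u t) x ≤ -(2 / (T - t))}
  have hclosed : IsClosed (S ∩ Icc 0 τ) := by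
    let P : Set (ℝ × ℝ) := Icc (0:ℝ) τ ×ˢ Icc (0:ℝ) 1
    have hP : IsCompact P := isCompact_Icc.prod isCompact_Icc
    have hc1 : ContinuousOn (fun p : ℝ × ℝ => deriv (u p.1) p.2) P :=
      h.cont_ux.mono (fun p hp => ⟨hp.1.1, mem_univ _⟩)
    have hc2 : ContinuousOn (fun p : ℝ × ℝ => -(2 / (T - p.1))) P := by
      apply ContinuousOn.neg
      apply ContinuousOn.div continuousOn_const (by fun_prop)
      intro p hp
      have := hp.1.2
      have : 0 < T - p.1 := by linarith
      exact this.ne'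
    have hcl : IsClosed (P ∩ {p | deriv (u p.1) p.2 ≤ -(2 / (T - p.1))}) := by
      have := hP.isClosed.isClosed_le hc1 hc2
      exact this
    have hco : IsCompact (P ∩ {p | deriv (u p.1) p.2 ≤ -(2 / (T - p.1))}) :=
      hP.of_isClosed_subset hcl inter_subset_left
    have := (hco.image continuous_fst).isClosed
    convert this using 1
    ext s
    constructor
    · rintro ⟨⟨x, hx, hx'⟩, hs⟩
      exact ⟨(s, x), ⟨⟨hs, hx⟩, hx'⟩, rfl⟩
    · rintro ⟨⟨s', x⟩, ⟨⟨hs, hx⟩, hx'⟩, rfl⟩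
      exact ⟨⟨x, hx, hx'⟩, hs⟩
  have hsub : Icc 0 τ ⊆ S := by
    apply hclosed.Icc_subset_of_forall_exists_gt
    · obtain ⟨a, ha, ea⟩ := (oh_periodic_ux h le_rfl).exists_mem_Ico₀ one_pos x₀
      refine ⟨a, Ico_subset_Icc_self ha, ?_⟩
      rw [← ea]; simpa using hx₀
    · rintro t ⟨⟨x₁, hx₁, hx₁'⟩, ht⟩ y hy
      have hy : t < y := hy
      have ht0 : 0 ≤ t := ht.1
      have hTt : 0 < T - t := by linarith [ht.2]
      -- minimiser of the slope
      have hcont : Continuous (deriv (u t)) :=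
        continuous_iff_continuousAt.2 fun x => (h.diff_xx t ht0 x).continuousAt
      obtain ⟨x, hx, hmin⟩ := isCompact_Icc.exists_isMinOn ⟨x₁, hx₁⟩ hcont.continuousOn
      have hmin' : ∀ a, deriv (u t) x ≤ deriv (u t) a := by
        intro a
        obtain ⟨a', ha', ea⟩ := (oh_periodic_ux h ht0).exists_mem_Ico₀ one_pos a
        rw [ea]; exact hmin (Ico_subset_Icc_self ha')
      have hle : deriv (u t) x ≤ -(2 / (T - t)) := (hmin' x₁).trans hx₁'
      have hxx : deriv (deriv (u t)) x = 0 :=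
        IsLocalMin.deriv_eq_zero (Filter.Eventually.of_forall hmin')
      have hq : 2 / T ^ 2 ≤ 2 / (T - t) ^ 2 := by
        apply div_le_div_of_nonneg_left (by norm_num) (by positivity)
        exact pow_le_pow_left₀ hTt.le (by linarith) 2
      -- the right-hand side at the minimiser
      let G : ℝ × ℝ → ℝ := fun p => γ * u p.1 p.2 - (deriv (u p.1) p.2) ^ 2 -
        u p.1 p.2 * deriv (deriv (u p.1)) p.2
      have hG : ContinuousOn G (Ici (0:ℝ) ×ˢ (univ : Set ℝ)) :=
        ((continuousOn_const.mul h.cont_u).sub (h.cont_ux.pow 2)).sub (h.cont_u.mul h.cont_uxx)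
      have hGlt : G (t, x) < -(2 / (T - t) ^ 2) := by
        have h1 : (2 / (T - t)) ^ 2 ≤ (deriv (u t) x) ^ 2 := by
          have : 0 < 2 / (T - t) := by positivity
          nlinarith
        have h2 : (2 / (T - t)) ^ 2 = 2 * (2 / (T - t) ^ 2) := by field_simp
        have h3 : γ * u t x ≤ γ * A :=
          mul_le_mul_of_nonneg_left (hA t ⟨ht0, by linarith⟩ x) hγ.le
        simp only [G, hxx, mul_zero, sub_zero]
        linarith
      obtain ⟨C, hC1, hC2⟩ := exists_between hGlt
      have hev := (hG (t, x) ⟨ht0, mem_univ _⟩).eventually_lt_const hC1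
      obtain ⟨δ, hδ, hball⟩ := Metric.mem_nhdsWithin_iff.1 hev
      -- derivative of the barrier
      have hB : HasDerivAt (fun s : ℝ => -(2 / (T - s))) (-(2 / (T - t) ^ 2)) t := by
        have h1 : HasDerivAt (fun s : ℝ => T - s) (-1) t := by
          simpa using (hasDerivAt_id t).const_sub T
        have h2 := ((hasDerivAt_const t (2:ℝ)).div h1 hTt.ne').neg
        refine h2.congr_deriv ?_
        field_simp; norm_num
      have hev2 := hB.tendsto_slope_zero_right.eventually_const_lt hC2
      have hev3 : ∀ᶠ k : ℝ in nhdsWithin 0 (Ioi 0), k < δ := mem_nhdsWithin_of_mem_nhds (gt_mem_nhds hδ)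
      have hev4 : ∀ᶠ k : ℝ in nhdsWithin 0 (Ioi 0), k < y - t :=
        mem_nhdsWithin_of_mem_nhds (gt_mem_nhds (by linarith))
      obtain ⟨k, ⟨hk2, hk3, hk4⟩, hk0⟩ :=
        ((hev2.and (hev3.and hev4)).and self_mem_nhdsWithin).exists
      have hk0 : 0 < k := hk0
      refine ⟨t + k, ⟨x, hx, ?_⟩, by linarith, by linarith⟩
      have hinc : deriv (u (t + k)) x ≤ deriv (u t) x + C * k := by
        apply oh_ux_incr h ht0 hk0 hδ
        intro s hs z hz
        have hs0 : 0 < s := ht0.trans_lt hs.1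
        have heq := h.eqn s hs0.le hs0 z
        have hmem : (s, z) ∈ Metric.ball (t, x) δ ∩ Ici (0:ℝ) ×ˢ (univ : Set ℝ) := by
          refine ⟨?_, hs0.le, mem_univ _⟩
          rw [Metric.mem_ball, Prod.dist_eq, max_lt_iff, Real.dist_eq, Real.dist_eq]
          exact ⟨abs_lt.2 ⟨by linarith [hs.1], by linarith [hs.2]⟩,
            abs_lt.2 ⟨by linarith [hz.1], by linarith [hz.2]⟩⟩
        have hlt : G (s, z) < C := hball hmem
        simp only [G] at hlt
        linarith
      rw [smul_eq_mul, lt_inv_mul_iff₀ hk0] at hk2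
      linarith
  obtain ⟨x, -, hx⟩ := hsub ⟨hτ0, le_rfl⟩
  exact ⟨x, hx⟩

/-- if `|inf u₀'| ≥ |sup u₀'| > 0` for a mean-zero `u₀`, then for all
large `n` the initial data `x ↦ u₀(nx)` leads to finite-time wave breaking: no
periodic classical solution with this data and `u_x` bounded from below is global. -/
theorem wave_breaking_scaled_inf_sup
    (γ : ℝ) (hγ : 0 < γ) (u₀ : ℝ → ℝ) (hreg : ContDiff ℝ 2 u₀)
    (hper : ∀ x : ℝ, u₀ (x + 1) = u₀ x)
    (hmean : (∫ x in (0:ℝ)..1, u₀ x) = 0)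
    (hinfsup : |⨅ x : ℝ, deriv u₀ x| ≥ |⨆ x : ℝ, deriv u₀ x|)
    (hsuppos : 0 < |⨆ x : ℝ, deriv u₀ x|) :
    ∃ N : ℕ, ∀ n : ℕ, N ≤ n →
      ∀ u : ℝ → ℝ → ℝ,
        IsPeriodicOHSolution γ (Set.Ici 0) u →
        (∀ x : ℝ, u 0 x = u₀ ((n : ℝ) * x)) →
        ¬ ∃ c : ℝ, ∀ t ∈ Set.Ici (0 : ℝ), ∀ x : ℝ, c ≤ deriv (u t) x := by
  have hdiff : Differentiable ℝ u₀ := hreg.differentiable (by norm_num)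
  -- a point of negative slope
  obtain ⟨a, ha⟩ : ∃ a, deriv u₀ a < 0 := by
    by_contra! hcon
    have hmono : Monotone u₀ := monotone_of_deriv_nonneg hdiff hcon
    have hconst : ∀ x, u₀ x = u₀ 0 := by
      intro x
      obtain ⟨y, hy, ey⟩ := Function.Periodic.exists_mem_Ico₀ (f := u₀) (c := 1) hper one_pos x
      rw [ey]
      refine le_antisymm ?_ (hmono hy.1)
      rw [← hper 0]
      exact hmono (by simpa using hy.2.le)
    have hz : ∀ x, deriv u₀ x = 0 := by
      intro x
      rw [show u₀ = fun _ => u₀ 0 from funext hconst]; simp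
    simp [hz] at hsuppos
  obtain ⟨M, hM⟩ : ∃ M, ∀ x, |u₀ x| ≤ M := by
    obtain ⟨M, hM⟩ := isCompact_Icc.exists_bound_of_continuousOn
      (s := Icc (0:ℝ) 1) hdiff.continuous.continuousOn
    refine ⟨M, fun x => ?_⟩
    obtain ⟨y, hy, ey⟩ := Function.Periodic.exists_mem_Ico₀ (f := u₀) (c := 1) hper one_pos x
    rw [ey]; exact hM y (Ico_subset_Icc_self hy)
  set A : ℝ := Real.exp (2 * γ) * (2 * M) with hAdef
  set m : ℝ := - deriv u₀ a with hm
  have hm0 : 0 < m := by linarith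
  obtain ⟨N, hN⟩ := exists_nat_gt (max 2 (γ * A) / m)
  refine ⟨N, ?_⟩
  rintro n hn u h hu0 ⟨c, hc⟩
  have hnm : max 2 (γ * A) < n * m := by
    rw [div_lt_iff₀ hm0] at hN
    refine hN.trans_le (mul_le_mul_of_nonneg_right (by exact_mod_cast hn) hm0.le)
  have hnm2 : 2 < n * m := (le_max_left _ _).trans_lt hnm
  have hnmA : γ * A < n * m := (le_max_right _ _).trans_lt hnm
  have hn0 : (n : ℝ) ≠ 0 := by
    rintro h0; rw [h0] at hnm2; linarith
  have hnmpos : 0 < n * m := by linarith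
  have hbd := fun t ht x => oh_bound_s10 hγ h (M := M) (fun x => by rw [hu0]; exact hM _)
    (t := t) ht x
  set T : ℝ := 2 / (n * m) with hT
  have hTpos : 0 < T := by positivity
  have hT1 : T ≤ 1 := by rw [hT, div_le_one hnmpos]; exact hnm2.le
  have hTinv : 2 / T = n * m := by rw [hT]; field_simp
  have hAT : γ * A < 2 / T ^ 2 := by
    have : 2 / T ^ 2 = (n * m) ^ 2 / 2 := by rw [hT]; field_simp
    rw [this]; nlinarith
  have hx₀ : deriv (u 0) (a / n) ≤ -(2 / T) := by
    rw [hTinv, show u 0 = fun x => u₀ ((n : ℝ) * x) from funext hu0]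
    rw [deriv_comp_mul_left]
    rw [mul_div_cancel₀ _ hn0, hm, smul_eq_mul]
    linarith
  -- choose a time at which the barrier is below `c`
  set r : ℝ := min T (1 / (|c| + 1)) with hr
  have hcpos : 0 < |c| + 1 := by positivity
  have hrpos : 0 < r := lt_min hTpos (by positivity)
  obtain ⟨x, hx⟩ := oh_barrier hγ h hTpos hT1 hbd hAT hx₀ (τ := T - r)
    (by linarith [min_le_left T (1 / (|c| + 1))]) (by linarith)
  have h1 := hc (T - r) (by simp only [mem_Ici]; linarith [min_le_left T (1 / (|c| + 1))]) x
  rw [sub_sub_cancel] at hx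
  have h2 : |c| + 1 ≤ 1 / r := by
    rw [le_div_iff₀ hrpos]
    have := min_le_right T (1 / (|c| + 1))
    rw [← hr, le_div_iff₀ hcpos] at this
    linarith
  have h3 : 2 / r = 2 * (1 / r) := by ring
  have := neg_abs_le c
  have := abs_nonneg c
  linarith
end
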